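/- arXiv:1302.4285 — 4 statements merged into one kernel-verified Lean document; each statement's English description precedes it below -/
import Mathlib

section
/- Let s be a complex number with Re s > 1, and let Σ^♯ = ∑ 1/(m^{s+1} · n^4 · (m+2n)), the sum over all integers m ≥ 1 and nonzero integers n with m+2n ≠ 0. Then Σ^♯ = (π⁴/45)·ζ(s+2) + (4π²/3)·ζ(s+4) − (16 + 2^{−s})·ζ(s+6). -/
open Complex

lemma aux_congr {β α : Type*} [AddCommMonoid α] [TopologicalSpace α] {f g : β → α} {a b : α}
    (h : HasSum f a) (hf : ∀ n, g n = f n) (hab : b = a) : HasSum g b := by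
  rw [hab, funext hf]; exact h

lemma aux_tele1 : HasSum (fun n : ℤ => (1 / ((n : ℝ) + 1) - 1 / (n : ℝ))) 0 := by
  have hs : Summable (fun n : ℕ => (1 / ((n : ℝ) + 1) - 1 / (n : ℝ))) := by
    have h2 : Summable (fun n : ℕ => 2 * (1 / ((n + 1 : ℕ) : ℝ) ^ 2)) :=
      ((summable_nat_add_iff 1).2 (Real.summable_one_div_nat_pow.2 one_lt_two)).mul_left 2
    refine Summable.of_norm_bounded h2 ?_
    intro n
    rcases Nat.eq_zero_or_pos n with rfl | hn
    · norm_num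
    · have h1 : (1 : ℝ) ≤ n := by exact_mod_cast hn
      have : (1 / ((n : ℝ) + 1) - 1 / (n : ℝ)) = - (1 / (n * (n + 1))) := by
        field_simp; ring
      rw [this, norm_neg, Real.norm_of_nonneg (by positivity)]
      push_cast
      rw [mul_one_div, div_le_div_iff₀ (by positivity) (by positivity)]
      nlinarith
  have hN : HasSum (fun n : ℕ => (1 / ((n : ℝ) + 1) - 1 / (n : ℝ))) 0 := by
    rw [hs.hasSum_iff_tendsto_nat]
    have : ∀ n : ℕ, ∑ i ∈ Finset.range n, (1 / ((i : ℝ) + 1) - 1 / (i : ℝ)) = 1 / (n : ℝ) := by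
      intro n
      have := Finset.sum_range_sub (fun i : ℕ => 1 / (i : ℝ)) n
      simpa using this
    simp_rw [this]
    exact tendsto_one_div_atTop_nhds_zero_nat
  have := HasSum.of_nat_of_neg_add_one (f := fun n : ℤ => (1 / ((n : ℝ) + 1) - 1 / (n : ℝ)))
    (m := 0) (m' := 0) (by simpa using hN) (by
      convert hN using 2 with n
      push_cast
      have : -((n : ℝ) + 1) + 1 = -n := by ring
      rw [this, div_neg, div_neg]; ring)
  simpa using this

lemma aux_tele (m : ℕ) : HasSum (fun n : ℤ => (1 / ((n : ℝ) + m) - 1 / (n : ℝ))) 0 := by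
  induction m with
  | zero => simpa using hasSum_zero
  | succ k ih =>
    have h := ((Equiv.addRight (k : ℤ)).hasSum_iff).2 aux_tele1
    have h2 := ih.add h
    rw [add_zero] at h2
    convert h2 using 2 with n
    simp
    ring

lemma aux_even {f : ℤ → ℝ} (hf : ∀ n, f (-n) = f n) (h0 : f 0 = 0) {a : ℝ}
    (h : HasSum (fun n : ℕ => f n) a) : HasSum f (2 * a) := by
  have := HasSum.of_nat_of_neg (f := f) h (by simpa [hf] using h)
  rw [h0, sub_zero, ← two_mul] at this
  exact this

lemma aux4 : HasSum (fun n : ℤ => 1 / (n : ℝ) ^ 4) (Real.pi ^ 4 / 45) := by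
  have := aux_even (f := fun n : ℤ => 1 / (n : ℝ) ^ 4) (fun n => by push_cast; rw [Even.neg_pow (by decide)])
    (by simp) (by simpa using hasSum_zeta_four)
  convert this using 1; ring

lemma aux2 : HasSum (fun n : ℤ => 1 / (n : ℝ) ^ 2) (Real.pi ^ 2 / 3) := by
  have := aux_even (f := fun n : ℤ => 1 / (n : ℝ) ^ 2) (fun n => by push_cast; rw [Even.neg_pow (by decide)])
    (by simp) (by simpa using hasSum_zeta_two)
  convert this using 1; ring

lemma aux3 : HasSum (fun n : ℤ => 1 / (n : ℝ) ^ 3) 0 := by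
  have hs : Summable (fun n : ℤ => 1 / (n : ℝ) ^ 3) :=
    Real.summable_one_div_int_pow.2 (by norm_num)
  obtain ⟨a, ha⟩ := hs
  have h2 := ((Equiv.neg ℤ).hasSum_iff).2 ha
  have h3 := ha.add h2
  have h4 : HasSum (fun n : ℤ => (0 : ℝ)) (a + a) := by
    convert h3 using 2 with n
    simp
    rw [Odd.neg_pow (by decide), inv_neg]; ring
  have := h4.unique hasSum_zero
  have : a = 0 := by linarith
  rwa [this] at ha

lemma aux_bound (m n : ℤ) : |1 / ((n : ℝ) ^ 4 * (m + 2 * n))| ≤ 1 / (n : ℝ) ^ 4 := by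
  rw [← one_div_mul_one_div, abs_mul, abs_of_nonneg (by positivity : (0:ℝ) ≤ 1 / (n : ℝ) ^ 4)]
  apply mul_le_of_le_one_right (by positivity)
  by_cases h : m + 2 * n = 0
  · have : (m : ℝ) + 2 * n = 0 := by exact_mod_cast h
    simp [this]
  · have h1 : (1 : ℝ) ≤ |(m : ℝ) + 2 * n| := by exact_mod_cast Int.one_le_abs h
    rw [abs_div, abs_one, div_le_one (by linarith)]
    exact h1

lemma aux_id (m : ℕ) (hm : m ≠ 0) (n : ℤ) :
    1 / ((n : ℝ) ^ 4 * (m + 2 * n)) = 1 / m * (1 / (n : ℝ) ^ 4) - 2 / m ^ 2 * (1 / (n : ℝ) ^ 3)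
      + 4 / m ^ 3 * (1 / (n : ℝ) ^ 2) + 16 / m ^ 4 * (1 / ((m : ℝ) + 2 * n) - 1 / (2 * n))
      - (if n = 0 then 16 / (m : ℝ) ^ 5 else 0)
      - (if (m : ℤ) + 2 * n = 0 then 64 / (m : ℝ) ^ 5 else 0) := by
  have hm' : (m : ℝ) ≠ 0 := by exact_mod_cast hm
  by_cases h0 : n = 0
  · subst h0
    simp [hm]
    field_simp
    ring
  · have h0' : (n : ℝ) ≠ 0 := by exact_mod_cast h0
    by_cases h : (m : ℤ) + 2 * n = 0
    · have h' : (m : ℝ) + 2 * n = 0 := by exact_mod_cast h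
      have hmn : (m : ℝ) = -2 * n := by linarith
      rw [if_neg h0, if_pos h, h', hmn]
      field_simp
      ring
    · have h' : (m : ℝ) + 2 * n ≠ 0 := by exact_mod_cast h
      rw [if_neg h0, if_neg h]
      generalize hd : (m : ℝ) + 2 * n = d at h'
      have hmd : (m : ℝ) = d - 2 * n := by linarith
      field_simp
      rw [hmd]
      ring

lemma aux_g_summable (m : ℤ) : Summable (fun n : ℤ => 1 / ((n : ℝ) ^ 4 * (m + 2 * n))) :=
  Summable.of_norm_bounded (Real.summable_one_div_int_pow.2 (by norm_num : 1 < 4))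
    (fun n => aux_bound m n)

lemma aux_delta (m : ℕ) (c : ℝ) : HasSum (fun n : ℤ => if (m : ℤ) + 2 * n = 0 then c else 0)
    (if Even m then c else 0) := by
  by_cases h : Even m
  · obtain ⟨k, rfl⟩ := h
    have := hasSum_ite_eq (-(k : ℤ)) c
    simp only [Even.add_self, if_true]
    convert this using 3 with n
    push_cast
    omega
  · rw [if_neg h]
    convert hasSum_zero (α := ℝ) (β := ℤ) using 2 with n
    rw [if_neg]
    intro h2
    apply h
    rw [Nat.even_iff]
    omega

lemma aux_w (m : ℕ) (hm : m ≠ 0) :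
    HasSum (fun n : ℤ => 1 / ((m : ℝ) + 2 * n) - 1 / (2 * n)) 0 := by
  have hm' : (m : ℝ) ≠ 0 := by exact_mod_cast hm
  have hs : Summable (fun n : ℤ => 1 / ((m : ℝ) + 2 * n) - 1 / (2 * n)) := by
    have := (((((aux_g_summable m).sub (aux4.summable.mul_left (1 / (m : ℝ)))).add
      (aux3.summable.mul_left (2 / (m : ℝ) ^ 2))).sub
      (aux2.summable.mul_left (4 / (m : ℝ) ^ 3))).add
      ((hasSum_ite_eq (0 : ℤ) (16 / (m : ℝ) ^ 5)).summable)).add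
      (aux_delta m (64 / (m : ℝ) ^ 5)).summable
    refine (this.mul_left ((m : ℝ) ^ 4 / 16)).congr ?_
    intro n
    have := aux_id m hm n
    have e : ((m : ℤ) : ℝ) = m := by push_cast; rfl
    rw [e, this]
    generalize 1 / ((m : ℝ) + 2 * n) - 1 / (2 * n) = w
    have e2 : (m : ℝ) ^ 4 / 16 * (16 / (m : ℝ) ^ 4 * w) = w := by field_simp
    refine Eq.trans ?_ e2
    ring
  obtain ⟨W, hW⟩ := hs
  have h2 := ((Equiv.subLeft (-(m : ℤ))).hasSum_iff).2 hW
  have h3 := hW.add h2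
  have h4 := (aux_tele m).mul_left (1 / 2)
  have h5 : W + W = 1 / 2 * 0 := by
    refine h3.unique ?_
    refine aux_congr h4 (fun n => ?_) rfl
    simp only [Function.comp, Equiv.subLeft_apply]
    push_cast
    have e1 : (m : ℝ) + 2 * (-m - n) = -(m + 2 * n) := by ring
    have e2 : (2 : ℝ) * (-m - n) = -(2 * (n + m)) := by ring
    rw [e1, e2, div_neg, div_neg, ← one_div_mul_one_div, ← one_div_mul_one_div]
    ring
  have : W = 0 := by linarith
  rwa [this] at hW

lemma aux_inner (m : ℕ) (hm : m ≠ 0) :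
    HasSum (fun n : ℤ => 1 / ((n : ℝ) ^ 4 * (m + 2 * n)))
      (Real.pi ^ 4 / 45 / m + 4 * Real.pi ^ 2 / 3 / m ^ 3 - 16 / m ^ 5
        - (if Even m then 64 / (m : ℝ) ^ 5 else 0)) := by
  have := (((((aux4.mul_left (1 / (m : ℝ))).sub
      (aux3.mul_left (2 / (m : ℝ) ^ 2))).add
      (aux2.mul_left (4 / (m : ℝ) ^ 3))).add ((aux_w m hm).mul_left (16 / (m : ℝ) ^ 4))).sub
      (hasSum_ite_eq (0 : ℤ) (16 / (m : ℝ) ^ 5))).sub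
      (aux_delta m (64 / (m : ℝ) ^ 5))
  refine aux_congr this (fun n => aux_id m hm n) ?_
  ring

lemma aux_zeta (s : ℂ) (hs : 1 < s.re) :
    HasSum (fun m : ℕ => 1 / (m : ℂ) ^ s) (riemannZeta s) := by
  rw [zeta_eq_tsum_one_div_nat_cpow hs]
  exact (Complex.summable_one_div_nat_cpow.2 hs).hasSum

lemma aux_zeta_even (s : ℂ) (hs : 1 < s.re) :
    HasSum (fun m : ℕ => if Even m then 1 / (m : ℂ) ^ s else 0) ((2 : ℂ) ^ (-s) * riemannZeta s) := by
  have hi : Function.Injective (fun k : ℕ => 2 * k) := fun a b h => by simpa using h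
  rw [← hi.hasSum_iff]
  · refine aux_congr ((aux_zeta s hs).mul_left ((2 : ℂ) ^ (-s))) (fun k => ?_) rfl
    simp only [Function.comp, even_two_mul, if_true]
    rw [Nat.cast_mul, Complex.natCast_mul_natCast_cpow, Complex.cpow_neg]
    simp
    ring
  · intro m hm
    rw [if_neg]
    rintro ⟨k, rfl⟩
    exact hm ⟨k, by simp; ring⟩

lemma aux_pow (s : ℂ) (m k : ℕ) (hm : m ≠ 0) :
    1 / (m : ℂ) ^ (s + 1 + k) = 1 / (m : ℂ) ^ (s + 1) * (1 / (m : ℂ) ^ k) := by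
  rw [Complex.cpow_add _ _ (by exact_mod_cast hm), Complex.cpow_natCast, one_div_mul_one_div]

lemma aux_inner_c (s : ℂ) (hs : 1 < s.re) (m : ℕ) :
    HasSum (fun n : ℤ => 1 / ((m : ℂ) ^ (s + 1) * (n : ℂ) ^ 4 * ((m : ℂ) + 2 * n)))
      ((Real.pi : ℂ) ^ 4 / 45 * (1 / (m : ℂ) ^ (s + 2)) +
        4 * (Real.pi : ℂ) ^ 2 / 3 * (1 / (m : ℂ) ^ (s + 4)) - 16 * (1 / (m : ℂ) ^ (s + 6)) -
        64 * (if Even m then 1 / (m : ℂ) ^ (s + 6) else 0)) := by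
  have hk : ∀ k : ℕ, s + (k : ℂ) ≠ 0 := by
    intro k h
    have := congrArg Complex.re h
    simp at this
    have : (0 : ℝ) ≤ k := by positivity
    linarith
  by_cases hm : m = 0
  · subst hm
    have h1 := hk 1
    have h2 := hk 2
    have h4 := hk 4
    have h6 := hk 6
    push_cast at h1 h2 h4 h6
    simpa [Complex.zero_cpow, h1, h2, h4, h6] using hasSum_zero
  · have h := (Complex.hasSum_ofReal.2 (aux_inner m hm)).mul_left (1 / (m : ℂ) ^ (s + 1))
    have p1 := aux_pow s m 1 hm
    have p3 := aux_pow s m 3 hm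
    have p5 := aux_pow s m 5 hm
    rw [show s + 1 + (1 : ℕ) = s + 2 by push_cast; ring] at p1
    rw [show s + 1 + (3 : ℕ) = s + 4 by push_cast; ring] at p3
    rw [show s + 1 + (5 : ℕ) = s + 6 by push_cast; ring] at p5
    rw [p1, p3, p5]
    refine aux_congr h (fun n => ?_) ?_
    · push_cast
      rw [one_div_mul_one_div, mul_assoc]
    · split_ifs <;> push_cast <;> ring

lemma aux_summable (s : ℂ) (hs : 1 < s.re) :
    Summable (fun x : ℕ × ℤ =>
      1 / ((x.1 : ℂ) ^ (s + 1) * (x.2 : ℂ) ^ 4 * ((x.1 : ℂ) + 2 * x.2))) := by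
  have h1 : Summable (fun m : ℕ => ‖1 / (m : ℂ) ^ (s + 1)‖) :=
    (Complex.summable_one_div_nat_cpow.2 (by simp; linarith)).norm
  have h2 := h1.mul_of_nonneg (aux4.summable) (fun _ => norm_nonneg _)
    (fun n => by simp only [Pi.zero_apply]; positivity)
  refine Summable.of_norm_bounded h2 ?_
  rintro ⟨m, n⟩
  have hb := aux_bound m n
  simp only
  rw [mul_assoc, ← one_div_mul_one_div, norm_mul]
  refine mul_le_mul_of_nonneg_left ?_ (norm_nonneg _)
  rw [← Real.norm_eq_abs, ← Complex.norm_real] at hb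
  push_cast at hb
  exact hb

theorem sigmaSharp_eval (s : ℂ) (hs : 1 < s.re) :
    (∑' x : {x : ℤ × ℤ // 1 ≤ x.1 ∧ x.2 ≠ 0 ∧ x.1 + 2 * x.2 ≠ 0},
          1 / ((x.1.1 : ℂ) ^ (s + 1) * (x.1.2 : ℂ) ^ (4 : ℕ) *
            ((x.1.1 : ℂ) + 2 * (x.1.2 : ℂ)))) =
      ((Real.pi : ℂ) ^ 4 / 45) * riemannZeta (s + 2) +
        (4 * (Real.pi : ℂ) ^ 2 / 3) * riemannZeta (s + 4) -
        (16 + (2 : ℂ) ^ (-s)) * riemannZeta (s + 6) := by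
  have hsum := (aux_summable s hs).hasSum.prod_fiberwise (fun m => aux_inner_c s hs m)
  have z2 := aux_zeta (s + 2) (by simp; linarith)
  have z4 := aux_zeta (s + 4) (by simp; linarith)
  have z6 := aux_zeta (s + 6) (by simp; linarith)
  have e6 := aux_zeta_even (s + 6) (by simp; linarith)
  have hR := (((z2.mul_left ((Real.pi : ℂ) ^ 4 / 45)).add
    (z4.mul_left (4 * (Real.pi : ℂ) ^ 2 / 3))).sub (z6.mul_left 16)).sub (e6.mul_left 64)
  have key := hsum.unique hR
  have h64 : (2 : ℂ) ^ (-(s + 6)) * 64 = 2 ^ (-s) := by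
    rw [neg_add, Complex.cpow_add _ _ two_ne_zero, Complex.cpow_neg 2 6]
    have : (2 : ℂ) ^ (6 : ℂ) = 64 := by
      rw [show (6 : ℂ) = ((6 : ℕ) : ℂ) by norm_num, Complex.cpow_natCast]; norm_num
    rw [this]; ring
  have hre : (∑' x : {x : ℤ × ℤ // 1 ≤ x.1 ∧ x.2 ≠ 0 ∧ x.1 + 2 * x.2 ≠ 0},
          1 / ((x.1.1 : ℂ) ^ (s + 1) * (x.1.2 : ℂ) ^ (4 : ℕ) *
            ((x.1.1 : ℂ) + 2 * (x.1.2 : ℂ)))) = ∑' x : ℕ × ℤ,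
      1 / ((x.1 : ℂ) ^ (s + 1) * (x.2 : ℂ) ^ 4 * ((x.1 : ℂ) + 2 * x.2)) := by
    have t := tsum_subtype {x : ℤ × ℤ | 1 ≤ x.1 ∧ x.2 ≠ 0 ∧ x.1 + 2 * x.2 ≠ 0}
      (fun x : ℤ × ℤ => 1 / ((x.1 : ℂ) ^ (s + 1) * (x.2 : ℂ) ^ (4 : ℕ) *
            ((x.1 : ℂ) + 2 * (x.2 : ℂ))))
    refine t.trans ?_
    have hi : Function.Injective (fun x : ℕ × ℤ => ((x.1 : ℤ), x.2)) := by
      rintro ⟨a, b⟩ ⟨c, d⟩ h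
      simpa using h
    rw [← hi.tsum_eq]
    · refine tsum_congr ?_
      rintro ⟨m, n⟩
      by_cases h : ((m : ℤ), n) ∈ {x : ℤ × ℤ | 1 ≤ x.1 ∧ x.2 ≠ 0 ∧ x.1 + 2 * x.2 ≠ 0}
      · rw [Set.indicator_of_mem h]
        simp
      · rw [Set.indicator_of_notMem h]
        simp only [Set.mem_ofPred_eq, not_and_or, not_not] at h
        rcases h with h | h | h
        · have : m = 0 := by omega
          subst this
          have h1 : s + 1 ≠ 0 := by
            intro h
            have := congrArg Complex.re h
            simp at this
            linarith
          simp [Complex.zero_cpow h1]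
        · simp [h]
        · have h' : (m : ℂ) + 2 * n = 0 := by exact_mod_cast h
          simp [h']
    · intro x hx
      have := Set.mem_of_indicator_ne_zero hx
      refine ⟨(x.1.toNat, x.2), ?_⟩
      have h1 : 1 ≤ x.1 := this.1
      ext
      · simp; omega
      · rfl
  rw [hre, key, ← h64]
  ring
end

section
/- For every complex number s with Re s > 1, the following functional relation between the zeta-function of the root system C₂ and the Riemann zeta function holds: ζ₂(s+1,3,1,1; C₂) − ζ₂(s+1,1,3,1; C₂) + ζ₂(1,1,3,s+1; C₂) − ζ₂(1,3,1,s+1; C₂) = −π²·ζ(s+4) + (10 + 2^{−s−1})·ζ(s+6). -/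
open Complex

/-- The zeta-function of the root system `C₂` with complex exponents:
`ζ₂(s₁,s₂,s₃,s₄;C₂) = ∑_{m,n ≥ 1} 1/(m^{s₁} n^{s₂} (m+n)^{s₃} (m+2n)^{s₄})`. -/
noncomputable def zetaC2 (s₁ s₂ s₃ s₄ : ℂ) : ℂ :=
  ∑' (m : ℕ+) (n : ℕ+),
    1 / (((m : ℕ) : ℂ) ^ s₁ * ((n : ℕ) : ℂ) ^ s₂ * (((m : ℕ) : ℂ) + ((n : ℕ) : ℂ)) ^ s₃ *
      (((m : ℕ) : ℂ) + 2 * ((n : ℕ) : ℂ)) ^ s₄)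


lemma hsc {ι : Type} {f g : ι → ℂ} {a b : ℂ} (h : HasSum f a) (hf : ∀ n, g n = f n) (hab : b = a) :
    HasSum g b := by
  obtain rfl : g = f := funext hf
  subst hab
  exact h

lemma U_one : HasSum (fun n : ℤ => (1:ℂ) / n - 1 / (n + 1)) 0 := by
  have h : Summable (fun n : ℕ => (1:ℂ) / n - 1 / (n + 1)) := by
    rw [← summable_nat_add_iff 1]
    have h2 : Summable (fun n : ℕ => 1 / ((n:ℝ) + 1) ^ 2) := by
      have := (summable_nat_add_iff 1).2 (Real.summable_one_div_nat_pow.2 (by norm_num : 1 < 2))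
      simpa using this
    refine Summable.of_norm_bounded h2 ?_
    intro n
    have e : (1:ℂ) / ((n + 1 : ℕ) : ℂ) - 1 / (((n + 1 : ℕ) : ℂ) + 1) =
        ((1 / (((n:ℝ) + 1) * (n + 2)) : ℝ) : ℂ) := by
      have h1 : (n:ℂ) + 1 ≠ 0 := by exact_mod_cast Nat.succ_ne_zero n
      have h3 : (n:ℂ) + 2 ≠ 0 := by exact_mod_cast Nat.succ_ne_zero (n + 1)
      have h4 : (n:ℂ) + 1 + 1 ≠ 0 := by exact_mod_cast Nat.succ_ne_zero (n + 1)
      push_cast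
      field_simp
      ring
    rw [e, Complex.norm_real, Real.norm_of_nonneg (by positivity)]
    apply one_div_le_one_div_of_le (by positivity)
    nlinarith [(Nat.cast_nonneg n : (0:ℝ) ≤ n)]
  have h1 : HasSum (fun n : ℕ => (1:ℂ) / n - 1 / (n + 1)) 0 := by
    have h2 := h.hasSum.tendsto_sum_nat
    have h3 : Filter.Tendsto (fun n : ℕ => ∑ i ∈ Finset.range n, ((1:ℂ) / i - 1 / (i + 1)))
        Filter.atTop (nhds 0) := by
      have e : ∀ n : ℕ, ∑ i ∈ Finset.range n, ((1:ℂ) / i - 1 / (i + 1)) = -(1 / n) := by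
        intro n
        have := Finset.sum_range_sub' (fun i : ℕ => (1:ℂ) / i) n
        simpa using this
      simp only [e]
      simpa using (tendsto_one_div_atTop_nhds_zero_nat (𝕜 := ℂ)).neg
    rw [← tendsto_nhds_unique h2 h3]
    exact h.hasSum
  have := HasSum.of_nat_of_neg_add_one (f := fun n : ℤ => (1:ℂ) / n - 1 / (n + 1)) (m := 0)
    (by simpa using h1) (m' := 0) (by
      refine hsc h1 (fun n => ?_) rfl
      push_cast
      rw [show -((n:ℂ) + 1) + 1 = -n by ring, div_neg, div_neg]; ring)
  simpa using this

lemma U_nat (k : ℕ) : HasSum (fun n : ℤ => (1:ℂ) / n - 1 / (n + k)) 0 := by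
  induction k with
  | zero => simp
  | succ k ih =>
    have h := (Equiv.addRight (k:ℤ)).hasSum_iff.2 U_one
    have := ih.add h
    rw [add_zero] at this
    refine hsc this (fun n => ?_) rfl
    simp
    ring

lemma S_nat (N : ℕ) : HasSum (fun n : ℤ => (1:ℂ) / n - 2 / (2 * n + N)) 0 := by
  have h1 : Summable (fun n : ℤ => (1:ℂ) / n - 2 / (2 * n + N)) := by
    have := ((U_nat N).summable.comp_injective
      (i := fun n : ℤ => 2 * n) (fun a b h => by simpa using h)).mul_left 2
    refine this.congr (fun n => ?_)
    simp only [Function.comp]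
    push_cast
    rcases eq_or_ne (n:ℂ) 0 with h | h
    · simp [h]; ring
    · field_simp
  have h2 := h1.hasSum
  set S := ∑' n : ℤ, ((1:ℂ) / n - 2 / (2 * n + N))
  have h3 := (Equiv.subLeft (-(N:ℤ))).hasSum_iff.2 h2
  have h4 : HasSum (fun n : ℤ => (1:ℂ) / n - 1 / (n + N)) (S + S) := by
    refine hsc (h2.add h3) (fun n => ?_) rfl
    simp only [Function.comp, Equiv.subLeft_apply]
    push_cast
    rw [show (2:ℂ) * (-N - n) + N = -(2 * n + N) by ring,
      show (-(N:ℂ) - n) = -(n + N) by ring, div_neg, div_neg]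
    ring
  have h5 := h4.unique (U_nat N)
  have : S = 0 := by linear_combination h5 / 2
  rwa [this] at h2

lemma cube_sum : HasSum (fun n : ℤ => (1:ℂ) / n ^ 3) 0 := by
  have h1 : Summable (fun n : ℤ => (1:ℂ) / n ^ 3) := by
    have := (Real.summable_one_div_int_pow (p := 3)).2 (by norm_num)
    have := Complex.ofRealCLM.summable this
    simpa using this
  have h2 := h1.hasSum
  set S := ∑' n : ℤ, (1:ℂ) / n ^ 3
  have h3 := (Equiv.neg ℤ).hasSum_iff.2 h2
  have h4 : HasSum (fun n : ℤ => (1:ℂ) / n ^ 3) (-S) := by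
    refine hsc h3.neg (fun n => ?_) rfl
    simp only [Function.comp, Equiv.neg_apply]
    push_cast
    rw [show (-(n:ℂ)) ^ 3 = -(n ^ 3) by ring, div_neg, neg_neg]
  have h5 := h2.unique h4
  have : S = 0 := by linear_combination h5 / 2
  rwa [this] at h2

lemma sq_sum : HasSum (fun n : ℤ => (1:ℂ) / n ^ 2) ((Real.pi : ℂ) ^ 2 / 3) := by
  have h := Complex.ofRealCLM.hasSum hasSum_zeta_two
  have h' : HasSum (fun n : ℕ => (1:ℂ) / n ^ 2) ((Real.pi : ℂ) ^ 2 / 6) := by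
    simpa using h
  have h1 := (hasSum_nat_add_iff' (f := fun n : ℕ => (1:ℂ) / n ^ 2) 1).2 h'
  have := HasSum.of_nat_of_neg_add_one (f := fun n : ℤ => (1:ℂ) / n ^ 2)
    (by simpa using h') (m' := (Real.pi : ℂ) ^ 2 / 6) (by
      simp at h1
      refine hsc h1 (fun n => ?_) rfl
      push_cast
      rw [neg_sq, one_div])
  convert this using 1
  ring

/-- The summand. -/
noncomputable def gg (N : ℕ) (n : ℤ) : ℂ := 1 / ((n:ℂ) ^ 3 * (N + n) * (N + 2 * n))

lemma corr_half (N : ℕ) (c : ℂ) : HasSum (fun n : ℤ => if 2 * n + N = 0 then c else 0)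
    (if Even N then c else 0) := by
  split_ifs with h
  · obtain ⟨k, hk⟩ := h
    have := hasSum_ite_eq (-(k:ℤ)) c
    convert this using 2 with n
    have : 2 * n + (N:ℤ) = 0 ↔ n = -k := by omega
    simp [this]
  · convert (hasSum_zero : HasSum (fun _ : ℤ => (0:ℂ)) 0) using 2 with n
    rw [if_neg]
    intro h'
    apply h
    rw [Nat.even_iff]
    omega

lemma gg_sum (N : ℕ) (hN : N ≠ 0) : HasSum (gg N)
    (-(Real.pi : ℂ) ^ 2 / N ^ 3 + 10 / N ^ 5 + if Even N then 32 / (N:ℂ) ^ 5 else 0) := by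
  have hN' : (N:ℂ) ≠ 0 := by exact_mod_cast hN
  have h := (((((cube_sum.mul_left (1 / (N:ℂ) ^ 2)).add (sq_sum.mul_left (-3 / (N:ℂ) ^ 3))).add
    ((U_nat N).mul_left (-1 / (N:ℂ) ^ 4))).add ((S_nat N).mul_left (8 / (N:ℂ) ^ 4))).add
    ((hasSum_ite_eq (0:ℤ) (15 / (N:ℂ) ^ 5)).add (hasSum_ite_eq (-(N:ℤ)) (-5 / (N:ℂ) ^ 5)))).add
    (corr_half N (32 / (N:ℂ) ^ 5))
  refine hsc h (fun n => ?_) ?_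
  · unfold gg
    by_cases h0 : n = 0
    · subst h0
      have : (0:ℤ) ≠ -N := by omega
      simp [hN, this]
      field_simp
      ring
    by_cases h1 : n = -N
    · subst h1
      have : 2 * (-(N:ℤ)) + N ≠ 0 := by omega
      have e : 2 * (-(N:ℂ)) + N = -N := by ring
      rw [if_neg h0, if_pos rfl, if_neg this]
      push_cast
      rw [e, show (N:ℂ) + 2 * -N = -N by ring]
      simp
      field_simp
      ring
    by_cases h2 : 2 * n + N = 0
    · have e : (N:ℂ) = -2 * n := by
        have : (N:ℤ) = -2 * n := by omega
        exact_mod_cast this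
      have h0' : (n:ℂ) ≠ 0 := by exact_mod_cast h0
      simp only [h0, h1, h2, if_true, if_false, e]
      rw [show (-2 * (n:ℂ) + 2 * n) = 0 by ring, show (2 * (n:ℂ) + -2 * n) = 0 by ring,
        show ((n:ℂ) + -2 * n) = -n by ring]
      simp
      field_simp
      ring
    · have h0' : (n:ℂ) ≠ 0 := by exact_mod_cast h0
      have h1' : (n:ℂ) + N ≠ 0 := by
        have : n + (N:ℤ) ≠ 0 := by omega
        exact_mod_cast this
      have h1'' : (N:ℂ) + n ≠ 0 := by rwa [add_comm]
      have h2' : 2 * (n:ℂ) + N ≠ 0 := by exact_mod_cast h2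
      have h2'' : (N:ℂ) + 2 * n ≠ 0 := by rwa [add_comm]
      have h3 : (N:ℂ) + n * 2 ≠ 0 := by rwa [mul_comm]
      simp only [h0, h1, h2, if_false]
      rw [add_comm (2 * (n:ℂ)) N, add_comm (n:ℂ) N]
      field_simp
      ring
  · field_simp
    ring

lemma gg_inner_sum (N : ℕ) (hN : N ≠ 0) :
    HasSum (fun n : ℤ => if 0 < 2 * n + N then gg N n + gg N (-N - n) else 0) (∑' n, gg N n) := by
  have h := (gg_sum N hN).summable
  have h1 := (h.indicator {n : ℤ | 0 < 2 * n + N})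
  have h2 := (h.indicator {n : ℤ | 2 * n + N < 0})
  have e : ∀ n, gg N n = Set.indicator {n : ℤ | 0 < 2 * n + N} (gg N) n +
      Set.indicator {n : ℤ | 2 * n + N < 0} (gg N) n := by
    intro n
    simp only [Set.indicator_apply, Set.mem_ofPred_eq]
    rcases lt_trichotomy (2 * n + (N:ℤ)) 0 with h | h | h
    · simp [h, h.not_gt]
    · have : (N:ℂ) + 2 * n = 0 := by rw [add_comm]; exact_mod_cast h
      simp [h, gg, this]
    · simp [h, h.not_gt]
  have h3 := h1.hasSum.add ((Equiv.subLeft (-(N:ℤ))).hasSum_iff.2 h2.hasSum)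
  refine hsc h3 (fun n => ?_) ?_
  · simp only [Function.comp, Equiv.subLeft_apply, Set.indicator_apply, Set.mem_ofPred_eq]
    by_cases hn : 0 < 2 * n + (N:ℤ)
    · have : 2 * (-(N:ℤ) - n) + N < 0 := by omega
      simp [hn, this]
    · have : ¬ (2 * (-(N:ℤ) - n) + N < 0) := by omega
      simp only [hn, this, if_false, add_zero]
  · rw [← h1.tsum_add h2]
    exact tsum_congr e

lemma inner_pnat (N : ℕ+) :
    ∑' n : ℕ+, ((gg N n + gg N (-N - n)) +
      (if 2 * n < N then gg N (-n) + gg N (-N + n) else 0)) =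
    (-(Real.pi : ℂ) ^ 2 / N ^ 3 + 10 / N ^ 5 + if Even (N:ℕ) then 32 / (N:ℂ) ^ 5 else 0) := by
  rw [← (gg_sum N N.ne_zero).tsum_eq]
  have h := gg_inner_sum N N.ne_zero
  rw [← h.tsum_eq]
  have hs := h.summable
  rw [tsum_int_eq_zero_add_tsum_pnat hs]
  have s1 := hs.comp_injective (i := fun n : ℕ+ => ((n:ℕ):ℤ)) (fun a b h => by simpa using h)
  have s2 := hs.comp_injective (i := fun n : ℕ+ => -((n:ℕ):ℤ)) (fun a b h => by simpa using h)
  have := s1.tsum_add s2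
  simp only [Function.comp] at this
  rw [add_assoc, ← this]
  have z : (if 0 < 2 * (0:ℤ) + ((N:ℕ):ℤ) then gg N 0 + gg N (-((N:ℕ):ℤ) - 0) else 0) = 0 := by
    simp [gg]
  rw [z, zero_add]
  apply tsum_congr
  intro n
  have e1 : 0 < 2 * ((n:ℕ):ℤ) + ((N:ℕ):ℤ) := by positivity
  rw [if_pos e1]
  congr 1
  have e2 : 2 * n < N ↔ 0 < 2 * (-((n:ℕ):ℤ)) + ((N:ℕ):ℤ) := by
    rw [← PNat.coe_lt_coe, PNat.mul_coe]
    have : ((2:ℕ+):ℕ) = 2 := rfl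
    rw [this]
    omega
  simp only [e2, sub_neg_eq_add]

lemma summable_aux (s : ℂ) (hs : 1 < s.re) (F : ℕ+ × ℕ+ → ℂ)
    (hF : ∀ m n : ℕ+, ∃ x d : ℕ, 0 < x ∧ F (m, n) = 1 / ((x:ℂ) ^ (s + 1) * d) ∧
      (m:ℕ) ^ 2 * (n:ℕ) ^ 2 ≤ x ^ 2 * d) : Summable F := by
  have h2 : Summable (fun n : ℕ+ => 1 / (((n:ℕ):ℝ)) ^ 2) :=
    (Real.summable_one_div_nat_pow.2 (by norm_num : 1 < 2)).comp_injective PNat.coe_injective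
  have h3 := h2.mul_of_nonneg h2 (fun n => by positivity) (fun n => by positivity)
  refine Summable.of_norm_bounded h3 ?_
  rintro ⟨m, n⟩
  obtain ⟨x, d, hx, e, hle⟩ := hF m n
  rw [e, norm_div, norm_one, norm_mul, Complex.norm_natCast_cpow_of_pos hx, Complex.norm_natCast,
    one_div_mul_one_div]
  have hm : (0:ℝ) < (m:ℕ) := by exact_mod_cast m.pos
  have hn : (0:ℝ) < (n:ℕ) := by exact_mod_cast n.pos
  apply one_div_le_one_div_of_le (by positivity)
  have h4 : (x:ℝ) ^ 2 ≤ (x:ℝ) ^ (s + 1).re := by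
    rw [← Real.rpow_natCast]
    apply Real.rpow_le_rpow_of_exponent_le
    · exact_mod_cast hx
    · simp; linarith
  have h5 : ((m:ℕ):ℝ) ^ 2 * ((n:ℕ):ℝ) ^ 2 ≤ (x:ℝ) ^ 2 * d := by exact_mod_cast hle
  exact h5.trans (by gcongr)

lemma zeta_pnat (s : ℂ) (hs : 1 < s.re) :
    HasSum (fun n : ℕ+ => 1 / ((n:ℕ):ℂ) ^ s) (riemannZeta s) := by
  have h := Complex.summable_one_div_nat_cpow.2 hs
  have h1 := h.comp_injective PNat.coe_injective
  rw [zeta_eq_tsum_one_div_nat_add_one_cpow hs]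
  have := tsum_pnat_eq_tsum_succ (f := fun n : ℕ => 1 / (n:ℂ) ^ s)
  push_cast at this
  rw [← this]
  exact h1.hasSum

lemma zeta_even (s : ℂ) (hs : 1 < s.re) :
    HasSum (fun n : ℕ+ => if Even (n:ℕ) then 1 / ((n:ℕ):ℂ) ^ s else 0)
      (2 ^ (-s) * riemannZeta s) := by
  have h := (zeta_pnat s hs).mul_left (2 ^ (-s))
  have hi : Function.Injective (fun n : ℕ+ => 2 * n) := fun a b h => by simpa using h
  rw [← hi.hasSum_iff]
  · refine hsc h (fun n => ?_) rfl
    have : Even ((2 * n : ℕ+) : ℕ) := by simp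
    simp only [Function.comp, this, if_true]
    have e : (((2 * n : ℕ+) : ℕ) : ℂ) = (2:ℕ) * ((n:ℕ):ℂ) := by simp
    rw [e, Complex.natCast_mul_natCast_cpow, Complex.cpow_neg]
    push_cast
    rw [one_div, mul_inv, one_div]
  · intro x hx
    rw [if_neg]
    intro he
    apply hx
    obtain ⟨k, hk⟩ := he
    have hk0 : 0 < k := by have := x.pos; omega
    refine ⟨⟨k, hk0⟩, ?_⟩
    apply PNat.coe_injective
    change 2 * k = (x:ℕ)
    omega

lemma reindex (H : ℕ+ × ℕ+ → ℂ) (hH : ∀ N n : ℕ+, ¬ 2 * n < N → H (N, n) = 0)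
    (hs : Summable (fun p : ℕ+ × ℕ+ => H (p.1 + 2 * p.2, p.2))) :
    Summable H ∧ ∑' p : ℕ+ × ℕ+, H (p.1 + 2 * p.2, p.2) = ∑' p, H p := by
  have hi : Function.Injective (fun p : ℕ+ × ℕ+ => (p.1 + 2 * p.2, p.2)) := by
    rintro ⟨a, b⟩ ⟨c, d⟩ h
    simp only [Prod.mk.injEq] at h
    obtain ⟨h1, rfl⟩ := h
    simpa using h1
  have hr : ∀ x ∉ Set.range (fun p : ℕ+ × ℕ+ => (p.1 + 2 * p.2, p.2)), H x = 0 := by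
    rintro ⟨N, n⟩ hx
    apply hH
    intro hlt
    apply hx
    exact ⟨(N - 2 * n, n), by simp [PNat.sub_add_of_lt hlt]⟩
  refine ⟨(hi.summable_iff hr).1 hs, hi.tsum_eq ?_⟩
  intro x hx
  by_contra h
  exact hx (hr x h)

theorem functional_relation_C2 (s : ℂ) (hs : 1 < s.re) :
    zetaC2 (s + 1) 3 1 1 - zetaC2 (s + 1) 1 3 1 + zetaC2 1 1 3 (s + 1) -
        zetaC2 1 3 1 (s + 1) =
      -(Real.pi : ℂ) ^ 2 * riemannZeta (s + 4) +
        (10 + (2 : ℂ) ^ (-s - 1)) * riemannZeta (s + 6) := by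
  let F (s₁ s₂ s₃ s₄ : ℂ) (p : ℕ+ × ℕ+) : ℂ :=
    1 / (((p.1 : ℕ) : ℂ) ^ s₁ * ((p.2 : ℕ) : ℂ) ^ s₂ * (((p.1 : ℕ) : ℂ) + ((p.2 : ℕ) : ℂ)) ^ s₃ *
      (((p.1 : ℕ) : ℂ) + 2 * ((p.2 : ℕ) : ℂ)) ^ s₄)
  have S1 : Summable (F (s + 1) 3 1 1) := by
    refine summable_aux s hs _ (fun m n => ⟨m, n ^ 3 * (m + n) * (m + 2 * n), m.pos, ?_, ?_⟩)
    · simp only [F, Complex.cpow_ofNat, Complex.cpow_one]; push_cast; ring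
    · have := m.pos
      have := n.pos
      calc (m:ℕ) ^ 2 * (n:ℕ) ^ 2 = (m:ℕ) ^ 2 * ((n:ℕ) ^ 2 * 1 * 1) := by ring
        _ ≤ _ := by gcongr <;> omega
  have S2 : Summable (F (s + 1) 1 3 1) := by
    refine summable_aux s hs _ (fun m n => ⟨m, n * (m + n) ^ 3 * (m + 2 * n), m.pos, ?_, ?_⟩)
    · simp only [F, Complex.cpow_ofNat, Complex.cpow_one]; push_cast; ring
    · have := m.pos
      have := n.pos
      calc (m:ℕ) ^ 2 * (n:ℕ) ^ 2 = (m:ℕ) ^ 2 * ((n:ℕ) * 1 ^ 3 * n) := by ring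
        _ ≤ _ := by gcongr <;> omega
  have S3 : Summable (F 1 1 3 (s + 1)) := by
    refine summable_aux s hs _ (fun m n => ⟨m + 2 * n, m * n * (m + n) ^ 3, by positivity, ?_, ?_⟩)
    · simp only [F, Complex.cpow_ofNat, Complex.cpow_one]; push_cast; ring
    · have := m.pos
      have := n.pos
      calc (m:ℕ) ^ 2 * (n:ℕ) ^ 2 = (m:ℕ) ^ 2 * (1 * n * n) := by ring
        _ ≤ (m + 2 * n : ℕ) ^ 2 * (m * n * (m + n) ^ 3) := by
          gcongr
          · omega
          · omega
          · calc (n:ℕ) ≤ m + n := by omega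
              _ ≤ _ := Nat.le_self_pow (by norm_num) _
  have S4 : Summable (F 1 3 1 (s + 1)) := by
    refine summable_aux s hs _ (fun m n => ⟨m + 2 * n, m * n ^ 3 * (m + n), by positivity, ?_, ?_⟩)
    · simp only [F, Complex.cpow_ofNat, Complex.cpow_one]; push_cast; ring
    · have := m.pos
      have := n.pos
      calc (m:ℕ) ^ 2 * (n:ℕ) ^ 2 = (m:ℕ) ^ 2 * (1 * n ^ 2 * 1) := by ring
        _ ≤ _ := by gcongr <;> omega
  have e1 : zetaC2 (s + 1) 3 1 1 = ∑' p, F (s + 1) 3 1 1 p := S1.tsum_prod.symm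
  have e2 : zetaC2 (s + 1) 1 3 1 = ∑' p, F (s + 1) 1 3 1 p := S2.tsum_prod.symm
  have e3 : zetaC2 1 1 3 (s + 1) = ∑' p, F 1 1 3 (s + 1) p := S3.tsum_prod.symm
  have e4 : zetaC2 1 3 1 (s + 1) = ∑' p, F 1 3 1 (s + 1) p := S4.tsum_prod.symm
  let P (p : ℕ+ × ℕ+) : ℂ := 1 / ((p.1:ℕ):ℂ) ^ (s + 1) * (gg p.1 p.2 + gg p.1 (-p.1 - p.2))
  let Q (p : ℕ+ × ℕ+) : ℂ := 1 / ((p.1:ℕ):ℂ) ^ (s + 1) *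
    (if 2 * p.2 < p.1 then gg p.1 (-p.2) + gg p.1 (-p.1 + p.2) else 0)
  have hP : ∀ p, F (s + 1) 3 1 1 p - F (s + 1) 1 3 1 p = P p := by
    rintro ⟨m, n⟩
    have hm : ((m:ℕ):ℂ) ≠ 0 := by exact_mod_cast m.ne_zero
    simp only [F, P, gg, Complex.cpow_ofNat, Complex.cpow_one]
    push_cast
    rw [show (-((m:ℕ):ℂ) - (n:ℕ)) ^ 3 * ((m:ℕ) + (-((m:ℕ):ℂ) - (n:ℕ))) *
      ((m:ℕ) + 2 * (-((m:ℕ):ℂ) - (n:ℕ))) = -((n:ℕ) * ((m:ℕ) + (n:ℕ)) ^ 3 * ((m:ℕ) + 2 * (n:ℕ))) by ring]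
    simp only [one_div, mul_inv, inv_neg]
    ring
  have hQ : ∀ p : ℕ+ × ℕ+, F 1 1 3 (s + 1) p - F 1 3 1 (s + 1) p = Q (p.1 + 2 * p.2, p.2) := by
    rintro ⟨m, n⟩
    have hlt : 2 * n < m + 2 * n := PNat.lt_add_left _ _
    simp only [F, Q, gg, Complex.cpow_ofNat, Complex.cpow_one, hlt, if_true]
    push_cast
    generalize ((m:ℕ):ℂ) = x
    generalize ((n:ℕ):ℂ) = y
    rw [show (-y) ^ 3 * (x + 2 * y + -y) * (x + 2 * y + 2 * -y) = -(x * y ^ 3 * (x + y)) by ring,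
      show (-(x + 2 * y) + y) ^ 3 * (x + 2 * y + (-(x + 2 * y) + y)) *
        (x + 2 * y + 2 * (-(x + 2 * y) + y)) = x * y * (x + y) ^ 3 by ring]
    simp only [one_div, mul_inv, inv_neg]
    ring
  have SP : Summable P := (S1.sub S2).congr (fun p => hP p)
  have SQ' : Summable (fun p : ℕ+ × ℕ+ => Q (p.1 + 2 * p.2, p.2)) :=
    (S3.sub S4).congr (fun p => hQ p)
  obtain ⟨SQ, hQs⟩ := reindex Q (fun N n h => by simp [Q, h]) SQ'
  have total : zetaC2 (s + 1) 3 1 1 - zetaC2 (s + 1) 1 3 1 + zetaC2 1 1 3 (s + 1) -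
        zetaC2 1 3 1 (s + 1) = ∑' p, (P p + Q p) := by
    rw [SP.tsum_add SQ, ← hQs, e1, e2, e3, e4, add_sub_assoc, ← S1.tsum_sub S2, ← S3.tsum_sub S4]
    simp only [hP, hQ]
  rw [total, (SP.add SQ).tsum_prod]
  have inner : ∀ N : ℕ+, ∑' n : ℕ+, (P (N, n) + Q (N, n)) =
      -(Real.pi : ℂ) ^ 2 * (1 / ((N:ℕ):ℂ) ^ (s + 4)) + 10 * (1 / ((N:ℕ):ℂ) ^ (s + 6)) +
      32 * (if Even (N:ℕ) then 1 / ((N:ℕ):ℂ) ^ (s + 6) else 0) := by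
    intro N
    have hN : ((N:ℕ):ℂ) ≠ 0 := by exact_mod_cast N.ne_zero
    simp only [P, Q, ← mul_add]
    rw [tsum_mul_left, inner_pnat N]
    have c4 : ((N:ℕ):ℂ) ^ (s + 4) = ((N:ℕ):ℂ) ^ (s + 1) * ((N:ℕ):ℂ) ^ 3 := by
      rw [show s + 4 = s + 1 + (3:ℕ) by push_cast; ring, Complex.cpow_add _ _ hN,
        Complex.cpow_natCast]
    have c6 : ((N:ℕ):ℂ) ^ (s + 6) = ((N:ℕ):ℂ) ^ (s + 1) * ((N:ℕ):ℂ) ^ 5 := by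
      rw [show s + 6 = s + 1 + (5:ℕ) by push_cast; ring, Complex.cpow_add _ _ hN,
        Complex.cpow_natCast]
    rw [c4, c6]
    simp only [mul_inv, div_eq_mul_inv]
    split_ifs <;> ring
  rw [tsum_congr inner]
  have r4 : 1 < (s + 4).re := by simp; linarith
  have r6 : 1 < (s + 6).re := by simp; linarith
  have fin := (((zeta_pnat (s + 4) r4).mul_left (-(Real.pi : ℂ) ^ 2)).add
    ((zeta_pnat (s + 6) r6).mul_left 10)).add ((zeta_even (s + 6) r6).mul_left 32)
  refine fin.tsum_eq.trans ?_
  have : (2:ℂ) ^ (-s - 1) = 32 * 2 ^ (-(s + 6)) := by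
    rw [show -s - 1 = -(s + 6) + (5:ℕ) by push_cast; ring, Complex.cpow_add _ _ two_ne_zero,
      Complex.cpow_natCast]
    ring
  rw [this]
  ring
end

section
/- Let h ∈ ℕ, let α : ℤ∖{0} → ℂ, β : (ℤ∖{0}) × ℕ₀ × {1,…,h} → ℝ, and c : {1,…,h} → ℕ be given, and set λ_j = (1+(−1)^j)/2 and φ(s) = (2^{1−s} − 1)·ζ(s). For each sign ± define R_±(θ) = ∑_{m ≠ 0} (±i)^m α(m) e^{imθ/2} − 2·∑_{η=1}^{h} ∑_{k=0}^{c_η} φ(c_η − k)·λ_{c_η−k} · ∑_{ξ=0}^{k} ( ∑_{m ≠ 0} (±i)^m β(m; k−ξ; η) e^{imθ/2} ) · (iθ)^ξ/ξ!. Assume that all series occurring in R_+(θ) and R_−(θ) converge absolutely for θ ∈ [−π, π], and that both R_+ and R_− are constant functions on [−π, π]. Then for every d ∈ ℕ: ∑_{m ≠ 0} α(m)/m^d − 2·∑_{η=1}^{h} ∑_{k=0}^{⌊c_η/2⌋} ζ(2k) ∑_{ω=0}^{c_η−2k} C(ω+d−1, ω)·(−2)^ω · ∑_{m ≠ 0}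 β(m; c_η−2k−ω; η)/m^{d+ω} + 2·∑_{η=1}^{h} ∑_{k=0}^{⌊d/2⌋} ζ(2k)·2^{−2k} ∑_{ω=0}^{c_η−1} C(ω+d−2k, ω)·(−2)^ω · ∑_{m ≠ 0} ((−1)^m + 1)·β(m; c_η−1−ω; η)/m^{d−2k+ω+1} − 2·∑_{η=1}^{h} ∑_{k=0}^{⌊(d+1)/2⌋} ζ(2k)·(1 − 2^{−2k}) ∑_{ω=0}^{c_η−1} C(ω+d−2k, ω)·(−2)^ω · ∑_{m ≠ 0} ((−1)^m − 1)·β(m; c_η−1−ω; η)/m^{d−2k+ω+1} = 0, where all series on the left-hand side converge absolutely. -/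
open Complex Finset

/-- `λ_j = (1 + (-1)^j)/2`. -/
noncomputable def lambdaPar (j : ℕ) : ℂ := (1 + (-1 : ℂ) ^ j) / 2

/-- `φ(s) = (2^{1-s} - 1) ζ(s)` at nonnegative integer arguments, with the values
`φ(1) = -log 2` and `φ(0) = -1/2` coming from analytic continuation. -/
noncomputable def phiNat (n : ℕ) : ℂ :=
  if n = 1 then -Complex.log 2 else ((2 : ℂ) ^ (1 - (n : ℂ)) - 1) * riemannZeta n

/-- Generalized binomial coefficient `C(x, n)` for an integer `x` (possibly negative). -/
noncomputable def genBinom (x : ℤ) (n : ℕ) : ℚ :=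
  (∏ i ∈ Finset.range n, ((x : ℚ) - i)) / (Nat.factorial n)

/-- The function `R_±(θ)` of Lemma 4.4: the choice `ε = i` gives `R_+` and `ε = -i`
gives `R_-`. -/
noncomputable def Rpm (h : ℕ) (c : ℕ → ℕ) (α : ℤ → ℂ) (β : ℤ → ℕ → ℕ → ℝ) (ε : ℂ)
    (θ : ℝ) : ℂ :=
  (∑' m : {m : ℤ // m ≠ 0}, ε ^ (m : ℤ) * α m * Complex.exp (Complex.I * (m : ℤ) * θ / 2)) -
    2 * ∑ η ∈ Finset.Icc 1 h, ∑ k ∈ Finset.range (c η + 1),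
      phiNat (c η - k) * lambdaPar (c η - k) *
        ∑ ξ ∈ Finset.range (k + 1),
          (∑' m : {m : ℤ // m ≠ 0}, ε ^ (m : ℤ) * ((β m (k - ξ) η : ℝ) : ℂ) *
              Complex.exp (Complex.I * (m : ℤ) * θ / 2)) *
            (Complex.I * (θ : ℂ)) ^ ξ / (Nat.factorial ξ)


namespace L44
open PowerSeries

/-- Power series `e^{y t}`. -/
noncomputable def E (y : ℂ) : ℂ⟦X⟧ := PowerSeries.rescale y (PowerSeries.exp ℂ)

lemma coeff_E (y : ℂ) (n : ℕ) : coeff n (E y) = y ^ n / (Nat.factorial n : ℂ) := by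
  simp [E, PowerSeries.coeff_rescale, PowerSeries.coeff_exp, div_eq_mul_inv]

lemma E_mul (a b : ℂ) : E a * E b = E (a + b) := PowerSeries.exp_mul_exp_eq_exp_add a b

lemma E_zero : E 0 = 1 := by
  ext n
  rw [coeff_E, PowerSeries.coeff_one]
  rcases n with _ | n <;> simp

/-- Even zeta generating series. -/
noncomputable def Z : ℂ⟦X⟧ := PowerSeries.mk fun n => if Even n then riemannZeta n else 0

noncomputable def Zh : ℂ⟦X⟧ := PowerSeries.rescale (1 / 2 : ℂ) Z

noncomputable def Ph : ℂ⟦X⟧ := PowerSeries.mk fun n => phiNat n * lambdaPar n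

lemma Ph_eq : Ph = 2 * Zh - Z := by
  ext n
  have h2 : (2 : ℂ⟦X⟧) = C (2 : ℂ) := (map_ofNat C 2).symm
  rw [map_sub, h2, PowerSeries.coeff_C_mul]
  simp only [Ph, Zh, Z, PowerSeries.coeff_rescale, coeff_mk]
  rcases Nat.even_or_odd n with hn | hn
  · have h1 : n ≠ 1 := by rintro rfl; simp at hn
    simp only [phiNat, lambdaPar, if_neg h1, if_pos hn, hn.neg_one_pow]
    rw [Complex.cpow_sub _ _ two_ne_zero]
    simp
    ring
  · have : ¬ Even n := by simpa using hn
    simp [lambdaPar, hn.neg_one_pow, this]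

lemma zeta_even (k : ℕ) : riemannZeta (2 * (k : ℂ)) =
    -(1 / 2) * ((2 * Real.pi * I) ^ (2 * k) * (bernoulli (2 * k) : ℂ) / ((2 * k).factorial : ℂ)) := by
  rcases Nat.eq_zero_or_pos k with rfl | hk
  · simp [riemannZeta_zero]; norm_num
  · rw [riemannZeta_two_mul_nat hk.ne']
    obtain ⟨j, rfl⟩ : ∃ j, k = j + 1 := ⟨k - 1, by omega⟩
    have : 2 * (j + 1) - 1 = 2 * j + 1 := by omega
    rw [this, mul_pow, mul_pow, pow_mul I, I_sq]
    ring

lemma Z_eq : Z = C (-(1 / 2) : ℂ) *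
    (PowerSeries.rescale (2 * Real.pi * I : ℂ) (bernoulliPowerSeries ℂ) + C (Real.pi * I : ℂ) * X) := by
  ext n
  rw [PowerSeries.coeff_C_mul, map_add, PowerSeries.coeff_rescale, PowerSeries.coeff_C_mul,
    PowerSeries.coeff_X]
  simp only [Z, bernoulliPowerSeries, coeff_mk]
  rcases Nat.even_or_odd n with hn | hn
  · have h1 : n ≠ 1 := by rintro rfl; simp at hn
    obtain ⟨k, rfl⟩ := hn
    rw [← two_mul] at h1 ⊢
    rw [if_neg h1, if_pos (by simp)]
    push_cast
    rw [zeta_even]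
    simp
    ring
  · have h0 : ¬ Even n := by simpa using hn
    rw [if_neg h0]
    by_cases h1 : n = 1
    · subst h1
      simp [bernoulli_one]
      ring
    · rw [if_neg h1, bernoulli_eq_zero_of_odd hn (by have := hn.pos; omega)]
      simp

lemma Z_mul0 : Z * (E (2 * Real.pi * I) - 1) =
    C (-(1 / 2) * (Real.pi * I) : ℂ) * X * (E (2 * Real.pi * I) + 1) := by
  have h := congrArg (PowerSeries.rescale (2 * Real.pi * I : ℂ))
    (bernoulliPowerSeries_mul_exp_sub_one ℂ)
  rw [map_mul, map_sub, map_one, PowerSeries.rescale_X] at h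
  change _ * (E (2 * Real.pi * I) - 1) = _ at h
  have h3 : C (2 * Real.pi * I : ℂ) = 2 * C (Real.pi * I : ℂ) := by
    rw [mul_assoc, map_mul, map_ofNat]
  have h2 : C (-(1 / 2) : ℂ) * 2 = -1 := by
    rw [show (2 : ℂ⟦X⟧) = C (2 : ℂ) from (map_ofNat C 2).symm, ← map_mul]; norm_num
  rw [h3] at h
  rw [Z_eq, map_mul C (-(1 / 2) : ℂ) (Real.pi * I)]
  linear_combination C (-(1 / 2) : ℂ) * h

lemma Z_mul : Z * (E (Real.pi * I) - E (-(Real.pi * I))) =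
    C (-(1 / 2) * (Real.pi * I) : ℂ) * X * (E (Real.pi * I) + E (-(Real.pi * I))) := by
  have h1 : E (Real.pi * I) = E (2 * Real.pi * I) * E (-(Real.pi * I)) := by
    rw [E_mul]; congr 1; ring
  rw [h1]
  linear_combination E (-(Real.pi * I)) * Z_mul0

lemma rescale_E (a y : ℂ) : PowerSeries.rescale a (E y) = E (a * y) := by
  ext n
  rw [PowerSeries.coeff_rescale, coeff_E, coeff_E, mul_pow]; ring

lemma Zh_mul : Zh * (E (Real.pi * I / 2) - E (-(Real.pi * I / 2))) =
    C (-(1 / 4) * (Real.pi * I) : ℂ) * X * (E (Real.pi * I / 2) + E (-(Real.pi * I / 2))) := by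
  have h := congrArg (PowerSeries.rescale (1 / 2 : ℂ)) Z_mul
  simp only [map_mul, map_sub, map_add, rescale_E, PowerSeries.rescale_X] at h
  have h1 : (1 / 2 : ℂ) * (Real.pi * I) = Real.pi * I / 2 := by ring
  have h2 : (1 / 2 : ℂ) * (-(Real.pi * I)) = -(Real.pi * I / 2) := by ring
  have hC : (PowerSeries.rescale (1 / 2 : ℂ)) (C (-(1 / 2) : ℂ)) = C (-(1 / 2) : ℂ) := by
    ext n; rw [PowerSeries.coeff_rescale, PowerSeries.coeff_C]; split_ifs with h <;> simp [h]
  have hC1 : (PowerSeries.rescale (1 / 2 : ℂ)) (C (Real.pi : ℂ)) = C (Real.pi : ℂ) := by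
    ext n; rw [PowerSeries.coeff_rescale, PowerSeries.coeff_C]; split_ifs with h <;> simp [h]
  have hC2 : (PowerSeries.rescale (1 / 2 : ℂ)) (C (I : ℂ)) = C (I : ℂ) := by
    ext n; rw [PowerSeries.coeff_rescale, PowerSeries.coeff_C]; split_ifs with h <;> simp [h]
  rw [hC, hC1, hC2, h1, h2] at h
  have h4 : C (-(1 / 4) * (Real.pi * I) : ℂ) = C (-(1 / 2) : ℂ) * (C (Real.pi : ℂ) * C I) * C (1 / 2 : ℂ) := by
    simp only [← map_mul]; congr 1; ring
  rw [h4]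
  change Zh * _ = _ at h
  rw [h]; ring

noncomputable def a : ℂ⟦X⟧ := E (Real.pi * I / 2)
noncomputable def ap : ℂ⟦X⟧ := E (-(Real.pi * I / 2))

lemma aap : a * ap = 1 := by rw [a, ap, E_mul, add_neg_cancel, E_zero]
lemma a_sq : E (Real.pi * I) = a ^ 2 := by rw [a, sq, E_mul]; congr 1; ring
lemma ap_sq : E (-(Real.pi * I)) = ap ^ 2 := by rw [ap, sq, E_mul]; congr 1; ring

/-- `π i X`. -/
noncomputable def q : ℂ⟦X⟧ := C (Real.pi * I : ℂ)

lemma Zh_a : 4 * (Zh * (a - ap)) = - q * X * (a + ap) := by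
  have h := Zh_mul
  rw [map_mul] at h
  have h4 : 4 * C (-(1 / 4) : ℂ) = -1 := by
    rw [show (4 : ℂ⟦X⟧) = C (4 : ℂ) from (map_ofNat C 4).symm, ← map_mul]; norm_num
  change Zh * (a - ap) = C (-(1 / 4) : ℂ) * q * X * (a + ap) at h
  linear_combination 4 * h + (q * X * (a + ap)) * h4

lemma Z_a : 2 * (Z * (a ^ 2 - ap ^ 2)) = - q * X * (a ^ 2 + ap ^ 2) := by
  have h := Z_mul
  rw [map_mul, a_sq, ap_sq] at h
  have h4 : 2 * C (-(1 / 2) : ℂ) = -1 := by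
    rw [show (2 : ℂ⟦X⟧) = C (2 : ℂ) from (map_ofNat C 2).symm, ← map_mul]; norm_num
  change _ = C (-(1 / 2) : ℂ) * q * X * _ at h
  linear_combination 2 * h + (q * X * (a ^ 2 + ap ^ 2)) * h4

lemma sin_ne : a ^ 2 - ap ^ 2 ≠ 0 := by
  intro h
  have := congrArg (coeff 1) h
  rw [← a_sq, ← ap_sq, map_sub, coeff_E, coeff_E] at this
  simp at this

lemma Ph_sin : 2 * (Ph * (a ^ 2 - ap ^ 2)) = -2 * q * X := by
  rw [Ph_eq]
  linear_combination (a + ap) * Zh_a - Z_a - 2 * q * X * aap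

lemma Ph_cos : Ph * (a ^ 2 + ap ^ 2) = 2 * Z := by
  apply mul_right_cancel₀ sin_ne
  have h2 : (2 : ℂ⟦X⟧) ≠ 0 := by
    rw [show (2 : ℂ⟦X⟧) = C (2 : ℂ) from (map_ofNat C 2).symm]; simp
  apply mul_left_cancel₀ h2
  linear_combination (a ^ 2 + ap ^ 2) * Ph_sin - 2 * Z_a

lemma solve_p (pp pm s0 s1 : ℂ⟦X⟧) (h0 : pp - pm = -2 * q * s0)
    (h1 : pp * a ^ 2 - pm * ap ^ 2 = 2 * q * s1) :
    X * (pp + pm) = -4 * (Zh * (s1 + s0)) + 4 * ((Z - Zh) * (s1 - s0)) := by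
  apply mul_right_cancel₀ sin_ne
  have hpp : pp * (a ^ 2 - ap ^ 2) = 2 * q * (s1 + s0 * ap ^ 2) := by
    linear_combination h1 - ap ^ 2 * h0
  have hpm : pm * (a ^ 2 - ap ^ 2) = 2 * q * (s1 + s0 * a ^ 2) := by
    linear_combination h1 - a ^ 2 * h0
  linear_combination X * hpp + X * hpm + (s1 + s0) * (a + ap) * Zh_a
    - 2 * (s1 - s0) * Z_a + (s1 - s0) * (a + ap) * Zh_a - 4 * s1 * q * X * aap

lemma coeff_even (f : ℕ → ℂ) (Q : ℂ⟦X⟧) (n : ℕ) :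
    coeff n ((PowerSeries.mk fun n => if Even n then f n else 0) * Q) =
      ∑ k ∈ Finset.range (n / 2 + 1), f (2 * k) * coeff (n - 2 * k) Q := by
  rw [PowerSeries.coeff_mul, Finset.Nat.sum_antidiagonal_eq_sum_range_succ_mk]
  simp only [coeff_mk, ite_mul, zero_mul]
  rw [← Finset.sum_filter]
  symm
  refine Finset.sum_bij (fun k _ => 2 * k) ?_ ?_ ?_ ?_
  · intro k hk
    simp only [Finset.mem_range, Finset.mem_filter] at hk ⊢
    exact ⟨by omega, by simp⟩
  · intro x _ y _ h; simpa using h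
  · intro b hb
    simp only [Finset.mem_range, Finset.mem_filter] at hb
    obtain ⟨hb, k, rfl⟩ := hb
    exact ⟨k, by simp; omega, by omega⟩
  · intro k hk; rfl

/-- Coefficientwise derivative. -/
def HD (f : ℝ → ℂ⟦X⟧) (fp : ℂ⟦X⟧) (x : ℝ) : Prop :=
  ∀ n, HasDerivAt (fun y => coeff n (f y)) (coeff n fp) x

lemma HD.mul {f g : ℝ → ℂ⟦X⟧} {fp gp : ℂ⟦X⟧} {x : ℝ} (hf : HD f fp x) (hg : HD g gp x) :
    HD (fun y => f y * g y) (fp * g x + f x * gp) x := by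
  intro n
  simp only [map_add, PowerSeries.coeff_mul]
  rw [← Finset.sum_add_distrib]
  exact HasDerivAt.fun_sum fun i _ => (hf i.1).mul (hg i.2)

lemma HD.const (f : ℂ⟦X⟧) (x : ℝ) : HD (fun _ => f) 0 x := by
  intro n
  simpa using hasDerivAt_const x (coeff n f)

lemma HD_E (z w : ℂ) (x : ℝ) : HD (fun y => E (z * (y - w))) (C z * X * E (z * (x - w))) x := by
  intro n
  simp only [coeff_E, mul_assoc]
  rw [PowerSeries.coeff_C_mul]
  have h0 : HasDerivAt (fun y : ℝ => z * ((y : ℂ) - w)) z x := by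
    have := ((Complex.ofRealCLM.hasDerivAt (x := x)).sub_const w).const_mul z
    simpa using this
  rcases n with _ | n
  · simpa using hasDerivAt_const x (1 : ℂ)
  · rw [PowerSeries.coeff_succ_X_mul, coeff_E]
    have := (h0.pow (n + 1)).div_const ((n + 1).factorial : ℂ)
    refine this.congr_deriv ?_
    rw [Nat.factorial_succ]
    have : (n.factorial : ℂ) ≠ 0 := by exact_mod_cast n.factorial_ne_zero
    have : (n + 1 : ℂ) ≠ 0 := by exact_mod_cast n.succ_ne_zero
    push_cast
    field_simp

lemma antider (G : ℕ → ℝ → ℂ) (s : Set ℝ) (hs : Convex ℝ s) (h0s : 0 ∈ s)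
    (hG : ∀ d x, HasDerivAt (G (d + 1)) (I / 2 * G d x) x)
    (h0 : ∃ K, ∀ x ∈ s, G 0 x = K) (d : ℕ) :
    ∀ x ∈ s, G d x = coeff d ((PowerSeries.mk fun n => G n 0) * E (I / 2 * (x - 0))) := by
  induction d with
  | zero =>
    intro x hx
    obtain ⟨K, hK⟩ := h0
    rw [PowerSeries.coeff_mul]
    simp [coeff_E, hK x hx, hK 0 h0s]
  | succ d ih =>
    intro x hx
    have hH : ∀ y : ℝ, HasDerivAt (fun y : ℝ => G (d + 1) y -
        coeff (d + 1) ((PowerSeries.mk fun n => G n 0) * E (I / 2 * (y - 0))))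
        (I / 2 * G d y - I / 2 * coeff d ((PowerSeries.mk fun n => G n 0) * E (I / 2 * (y - 0)))) y := by
      intro y
      refine (hG d y).sub ?_
      have := (HD.const (PowerSeries.mk fun n => G n 0) y).mul (HD_E (I / 2) 0 y) (d + 1)
      refine this.congr_deriv ?_
      rw [show ∀ P Q c e : ℂ⟦X⟧, 0 * Q + P * (c * X * e) = c * (X * (P * e)) from
        fun P Q c e => by ring, PowerSeries.coeff_C_mul, PowerSeries.coeff_succ_X_mul]
    have key := hs.norm_image_sub_le_of_norm_hasDerivWithin_le (C := 0)
      (fun y _ => (hH y).hasDerivWithinAt)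
      (fun y hy => by rw [ih y hy]; simp) h0s hx
    rw [zero_mul, norm_le_zero_iff, sub_eq_zero] at key
    have e0 : coeff (d + 1) ((PowerSeries.mk fun n => G n 0) * E (I / 2 * ((0 : ℝ) - 0)))
        = G (d + 1) 0 := by simp [E_zero]
    rw [e0, sub_self, sub_eq_zero] at key
    exact key

/-- The `d`-th formal antiderivative of the double sum. -/
noncomputable def F (H : Finset ℕ) (c : ℕ → ℕ) (W : ℕ → ℕ → ℝ → ℂ⟦X⟧) (s : ℝ) (d : ℕ) (x : ℝ) : ℂ :=
  ∑ η ∈ H, coeff (c η) (2 * Ph * (E (I * (x - s)) * W η d x))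

lemma F_deriv (H : Finset ℕ) (c : ℕ → ℕ) (W : ℕ → ℕ → ℝ → ℂ⟦X⟧)
    (hW : ∀ η ∈ H, ∀ d x, HD (W η (d + 1)) (C (I / 2) * (W η d x - 2 * X * W η (d + 1) x)) x)
    (s : ℝ) (d : ℕ) (x : ℝ) : HasDerivAt (F H c W s (d + 1)) (I / 2 * F H c W s d x) x := by
  unfold F
  rw [Finset.mul_sum]
  refine HasDerivAt.fun_sum fun η hη => ?_
  have := ((HD.const (2 * Ph) x).mul ((HD_E I s x).mul (hW η hη d x))) (c η)
  refine this.congr_deriv ?_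
  rw [← PowerSeries.coeff_C_mul]
  congr 1
  have hI : C I = 2 * C (I / 2) := by
    rw [← map_ofNat C 2, ← map_mul]; congr 1; ring
  rw [hI]
  ring

lemma core (H : Finset ℕ) (c : ℕ → ℕ) (hc : ∀ η ∈ H, 1 ≤ c η) (A : ℕ → ℝ → ℂ)
    (W : ℕ → ℕ → ℝ → ℂ⟦X⟧)
    (hA : ∀ d x, HasDerivAt (A (d + 1)) (I / 2 * A d x) x)
    (hW : ∀ η ∈ H, ∀ d x, HD (W η (d + 1)) (C (I / 2) * (W η d x - 2 * X * W η (d + 1) x)) x)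
    (hAp : ∀ d, A d (2 * Real.pi) = A d (-(2 * Real.pi)))
    (hWp : ∀ η ∈ H, ∀ d, W η d (2 * Real.pi) = W η d (-(2 * Real.pi)))
    (hp : ∃ K, ∀ x ∈ Set.Icc 0 (2 * Real.pi), A 0 x - F H c W Real.pi 0 x = K)
    (hm : ∃ K, ∀ x ∈ Set.Icc (-(2 * Real.pi)) 0, A 0 x - F H c W (-Real.pi) 0 x = K)
    (s0 s1 : ℂ⟦X⟧) (hs0 : s0 = PowerSeries.mk fun d => ∑ η ∈ H, coeff (c η - 1) (W η d 0))
    (hs1 : s1 = PowerSeries.mk fun d => ∑ η ∈ H, coeff (c η - 1) (W η d (2 * Real.pi))) :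
    coeff 0 (s1 + s0) = 0 ∧ ∀ d, 2 * A d 0 = (∑ η ∈ H, coeff (c η) (4 * (Z * W η d 0))) +
      coeff (d + 1) (-4 * (Zh * (s1 + s0)) + 4 * ((Z - Zh) * (s1 - s0))) := by
  have hpi := Real.pi_pos
  set Gp : ℕ → ℝ → ℂ := fun d x => A d x - F H c W Real.pi d x with hGp
  set Gm : ℕ → ℝ → ℂ := fun d x => A d x - F H c W (-Real.pi) d x with hGm
  have app := antider Gp (Set.Icc 0 (2 * Real.pi)) (convex_Icc _ _) ⟨le_rfl, by positivity⟩
    (fun d x => by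
      have := (hA d x).sub (F_deriv H c W hW Real.pi d x)
      rw [← mul_sub] at this
      exact this) hp
  have am := antider Gm (Set.Icc (-(2 * Real.pi)) 0) (convex_Icc _ _) ⟨by linarith, le_rfl⟩
    (fun d x => by
      have := (hA d x).sub (F_deriv H c W hW (-Real.pi) d x)
      rw [← mul_sub] at this
      exact this) hm
  set pp : ℂ⟦X⟧ := PowerSeries.mk fun n => Gp n 0 with hpp
  set pm : ℂ⟦X⟧ := PowerSeries.mk fun n => Gm n 0 with hpm
  have ep : E (I * ((0 : ℝ) - Real.pi)) = ap ^ 2 := by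
    rw [← ap_sq]; congr 1; push_cast; ring
  have em : E (I * ((0 : ℝ) - (-Real.pi : ℝ))) = a ^ 2 := by
    rw [← a_sq]; congr 1; push_cast; ring
  have ep2 : E (I * ((2 * Real.pi : ℝ) - Real.pi)) = a ^ 2 := by
    rw [← a_sq]; congr 1; push_cast; ring
  have em2 : E (I * ((-(2 * Real.pi) : ℝ) - (-Real.pi : ℝ))) = ap ^ 2 := by
    rw [← ap_sq]; congr 1; push_cast; ring
  have ep3 : E (I / 2 * ((2 * Real.pi : ℝ) - 0)) = a ^ 2 := by
    rw [← a_sq]; congr 1; push_cast; ring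
  have em3 : E (I / 2 * ((-(2 * Real.pi) : ℝ) - 0)) = ap ^ 2 := by
    rw [← ap_sq]; congr 1; push_cast; ring
  have c2q : ∀ n (P : ℂ⟦X⟧), coeff n (2 * q * P) = 2 * (Real.pi * I) * coeff n P := by
    intro n P
    rw [← PowerSeries.coeff_C_mul, map_mul C (2 : ℂ) (Real.pi * I), map_ofNat]; rfl
  have cX : ∀ n, 1 ≤ n → ∀ P : ℂ⟦X⟧, coeff n (2 * q * X * P) =
      2 * (Real.pi * I) * coeff (n - 1) P := by
    intro n hn P
    obtain ⟨n, rfl⟩ : ∃ j, n = j + 1 := ⟨n - 1, by omega⟩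
    rw [mul_assoc, c2q, PowerSeries.coeff_succ_X_mul]; rfl
  have h0 : pp - pm = -2 * q * s0 := by
    ext d
    rw [show -2 * q * s0 = -(2 * q * s0) by ring, map_neg, c2q, map_sub, hpp, hpm, hs0]
    simp only [coeff_mk, hGp, hGm, F]
    rw [Finset.mul_sum, sub_sub_sub_cancel_left, ← Finset.sum_sub_distrib, ← Finset.sum_neg_distrib]
    refine Finset.sum_congr rfl fun η hη => ?_
    rw [ep, em, ← map_sub, ← cX _ (hc η hη), ← map_neg]
    congr 1
    linear_combination W η d 0 * Ph_sin
  have h1 : pp * a ^ 2 - pm * ap ^ 2 = 2 * q * s1 := by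
    ext d
    have k1 := app d (2 * Real.pi) ⟨by positivity, le_rfl⟩
    have k2 := am d (-(2 * Real.pi)) ⟨le_rfl, by linarith⟩
    rw [ep3] at k1
    rw [em3] at k2
    rw [map_sub, ← k1, ← k2, c2q, hs1]
    simp only [coeff_mk, hGp, hGm, F]
    rw [hAp d, Finset.mul_sum, sub_sub_sub_cancel_left, ← Finset.sum_sub_distrib]
    refine Finset.sum_congr rfl fun η hη => ?_
    rw [ep2, em2, ← map_sub, ← cX _ (hc η hη), ← hWp η hη]
    congr 1
    linear_combination -W η d (2 * Real.pi) * Ph_sin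
  have hs := solve_p pp pm s0 s1 h0 h1
  constructor
  · have k0 := congrArg (coeff 0) h0
    have k1 := congrArg (coeff 0) h1
    rw [show -2 * q * s0 = -(2 * q * s0) by ring, map_neg, c2q, map_sub] at k0
    rw [c2q, map_sub, ← a_sq, ← ap_sq] at k1
    simp only [PowerSeries.coeff_mul, Finset.Nat.antidiagonal_zero, Finset.sum_singleton, coeff_E,
      pow_zero, Nat.factorial_zero, Nat.cast_one, div_one, mul_one] at k1
    have h2 : (2 * (Real.pi * I) : ℂ) ≠ 0 := by simp [Real.pi_ne_zero]
    apply mul_left_cancel₀ h2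
    rw [map_add]
    linear_combination k0 - k1
  · intro d
    rw [← hs, PowerSeries.coeff_succ_X_mul, map_add, hpp, hpm]
    simp only [coeff_mk, hGp, hGm, F, ep, em]
    have : ∑ η ∈ H, coeff (c η) (4 * (Z * W η d 0)) =
      ∑ η ∈ H, coeff (c η) (2 * Ph * (ap ^ 2 * W η d 0)) +
      ∑ η ∈ H, coeff (c η) (2 * Ph * (a ^ 2 * W η d 0)) := by
      rw [← Finset.sum_add_distrib]
      refine Finset.sum_congr rfl fun η hη => ?_
      rw [← map_add]
      congr 1
      linear_combination -2 * W η d 0 * Ph_cos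
    rw [this]
    ring

abbrev ι := {m : ℤ // m ≠ 0}

lemma gb_zero (x : ℤ) : genBinom x 0 = 1 := by simp [genBinom]

lemma gb_pascal (x : ℤ) (n : ℕ) :
    genBinom (x + 1) (n + 1) = genBinom x (n + 1) + genBinom x n := by
  unfold genBinom
  rw [Finset.prod_range_succ', Finset.prod_range_succ, Nat.factorial_succ]
  have h1 : (n.factorial : ℚ) ≠ 0 := by exact_mod_cast n.factorial_ne_zero
  have h2 : (n + 1 : ℚ) ≠ 0 := by exact_mod_cast n.succ_ne_zero
  have : ∀ i ∈ Finset.range n, (((x + 1 : ℤ) : ℚ) - ((i + 1 : ℕ) : ℚ)) = (x : ℚ) - i := by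
    intro i _; push_cast; ring
  rw [Finset.prod_congr rfl this]
  push_cast
  field_simp
  ring

lemma gb_neg (n : ℕ) : genBinom (n : ℤ) (n + 1) = 0 := by
  unfold genBinom
  rw [Finset.prod_range_succ]
  simp

/-- The series `(m + 2t)^{-d}`. -/
noncomputable def R (d : ℕ) (m : ι) : ℂ⟦X⟧ :=
  PowerSeries.mk fun ω => (genBinom ((ω : ℤ) + d - 1) ω : ℂ) * (-2 : ℂ) ^ ω / ((m : ℤ) : ℂ) ^ (d + ω)

lemma mne (m : ι) : ((m : ℤ) : ℂ) ≠ 0 := by exact_mod_cast m.2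

lemma R_zero (m : ι) : R 0 m = 1 := by
  ext n
  rw [PowerSeries.coeff_one]
  simp only [R, coeff_mk]
  rcases n with _ | n
  · simp [gb_zero]
  · rw [show (((n + 1 : ℕ) : ℤ) + (0 : ℕ) - 1) = n by push_cast; ring, gb_neg]
    simp

lemma R_rec (d : ℕ) (m : ι) :
    C ((m : ℤ) : ℂ) * R (d + 1) m = R d m - 2 * (X * R (d + 1) m) := by
  have hm := mne m
  ext n
  rw [PowerSeries.coeff_C_mul, map_sub, ← map_ofNat C 2, PowerSeries.coeff_C_mul]
  rcases n with _ | n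
  · simp [R, gb_zero]
    field_simp
    ring
  · rw [PowerSeries.coeff_succ_X_mul]
    simp only [R, coeff_mk]
    rw [show (((n + 1 : ℕ) : ℤ) + (d + 1 : ℕ) - 1) = (n + d : ℤ) + 1 by push_cast; ring, gb_pascal,
      show (((n + 1 : ℕ) : ℤ) + (d : ℕ) - 1) = (n + d : ℤ) by push_cast; ring,
      show ((n : ℤ) + (d + 1 : ℕ) - 1) = (n + d : ℤ) by push_cast; ring]
    push_cast
    field_simp
    ring

noncomputable def b (β : ℤ → ℕ → ℂ) (m : ι) : ℂ⟦X⟧ := PowerSeries.mk fun j => β m j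

noncomputable def g (β : ℤ → ℕ → ℂ) (d n : ℕ) (m : ι) : ℂ := coeff n (b β m * R d m)

lemma norm_m (m : ι) : 1 ≤ ‖((m : ℤ) : ℂ)‖ := by
  rw [Complex.norm_intCast]
  exact_mod_cast Int.one_le_abs m.2

lemma summ_div {f : ι → ℂ} (hf : Summable fun m => ‖f m‖) (e : ℕ) :
    Summable fun m : ι => ‖f m / ((m : ℤ) : ℂ) ^ e‖ := by
  refine Summable.of_nonneg_of_le (fun _ => norm_nonneg _) (fun m => ?_) hf
  rw [norm_div, norm_pow]
  exact div_le_self (norm_nonneg _) (one_le_pow₀ (norm_m m))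

lemma summ_mul {f w : ι → ℂ} (hf : Summable fun m => ‖f m‖) (hw : ∀ m, ‖w m‖ ≤ 2) :
    Summable fun m : ι => ‖w m * f m‖ := by
  refine Summable.of_nonneg_of_le (fun _ => norm_nonneg _) (fun m => ?_) (hf.mul_left 2)
  rw [norm_mul]
  exact mul_le_mul_of_nonneg_right (hw m) (norm_nonneg _)

lemma g_eq (β : ℤ → ℕ → ℂ) (d n : ℕ) (m : ι) : g β d n m = ∑ ω ∈ Finset.range (n + 1),
    (genBinom ((ω : ℤ) + d - 1) ω : ℂ) * (-2 : ℂ) ^ ω * (β m (n - ω) / ((m : ℤ) : ℂ) ^ (d + ω)) := by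
  rw [g, mul_comm, PowerSeries.coeff_mul, Finset.Nat.sum_antidiagonal_eq_sum_range_succ_mk]
  refine Finset.sum_congr rfl fun ω _ => ?_
  simp only [R, b, coeff_mk]
  ring

lemma g_summ {β : ℤ → ℕ → ℂ} (hβ : ∀ j, Summable fun m : ι => ‖β m j‖) (d n : ℕ) :
    Summable fun m => ‖g β d n m‖ := by
  have : ∀ ω ∈ Finset.range (n + 1), Summable fun m : ι =>
      ‖(genBinom ((ω : ℤ) + d - 1) ω : ℂ) * (-2 : ℂ) ^ ω * (β m (n - ω) / ((m : ℤ) : ℂ) ^ (d + ω))‖ := by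
    intro ω _
    simp only [norm_mul _ (_ / _)]
    exact (summ_div (hβ _) _).mul_left _
  refine Summable.of_nonneg_of_le (fun _ => norm_nonneg _) (fun m => ?_) (summable_sum this)
  rw [g_eq]
  exact norm_sum_le _ _

lemma V_eq {β : ℤ → ℕ → ℂ} (hβ : ∀ j, Summable fun m : ι => ‖β m j‖) (w : ι → ℂ)
    (hw : ∀ m, ‖w m‖ ≤ 2) (d n : ℕ) : ∑' m, w m * g β d n m = ∑ ω ∈ Finset.range (n + 1),
    (genBinom ((ω : ℤ) + d - 1) ω : ℂ) * (-2 : ℂ) ^ ω *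
      ∑' m : ι, (w m * β m (n - ω)) / ((m : ℤ) : ℂ) ^ (d + ω) := by
  simp only [← tsum_mul_left]
  rw [← Summable.tsum_finsetSum]
  · refine tsum_congr fun m => ?_
    rw [g_eq, Finset.mul_sum]
    refine Finset.sum_congr rfl fun ω _ => ?_
    ring
  · intro ω _
    exact (summ_div (summ_mul (hβ _) hw) _).of_norm.mul_left _

noncomputable def ex (x : ℝ) (m : ι) : ℂ := Complex.exp (I * (m : ℤ) * x / 2)

lemma norm_ex (x : ℝ) (m : ι) : ‖ex x m‖ = 1 := by
  rw [ex, show (I * (m : ℤ) * x / 2 : ℂ) = (((m : ℤ) * x / 2 : ℝ) : ℂ) * I by push_cast; ring]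
  exact Complex.norm_exp_ofReal_mul_I _

lemma norm_ex2 (x : ℝ) (m : ι) : ‖ex x m‖ ≤ 2 := by rw [norm_ex]; norm_num

lemma ser_deriv {f fp : ι → ℂ} (hf : Summable fun m => ‖f m‖) (hf' : Summable fun m => ‖fp m‖)
    (h : ∀ m : ι, ((m : ℤ) : ℂ) * f m = fp m) (x : ℝ) :
    HasDerivAt (fun y : ℝ => ∑' m, ex y m * f m) (I / 2 * ∑' m, ex x m * fp m) x := by
  rw [← tsum_mul_left]
  refine hasDerivAt_tsum (u := fun m => ‖fp m‖) (g' := fun m y => I / 2 * (ex y m * fp m)) (y₀ := 0)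
    hf' ?_ ?_ (summ_mul hf (norm_ex2 0)).of_norm x
  · intro m y
    have h0 : HasDerivAt (fun y : ℝ => I * (m : ℤ) * (y : ℂ) / 2) (I * (m : ℤ) / 2) y := by
      have := ((Complex.ofRealCLM.hasDerivAt (x := y)).const_mul (I * (m : ℤ))).div_const 2
      simpa using this
    have := h0.cexp.mul_const (f m)
    refine this.congr_deriv ?_
    rw [← h m, ex]; ring
  · intro m y
    rw [norm_mul, norm_mul, norm_ex]
    simp
    linarith [norm_nonneg (fp m)]

noncomputable def W (β : ℤ → ℕ → ℂ) (d : ℕ) (x : ℝ) : ℂ⟦X⟧ :=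
  PowerSeries.mk fun n => ∑' m, ex x m * g β d n m

lemma W_deriv {β : ℤ → ℕ → ℂ} (hβ : ∀ j, Summable fun m : ι => ‖β m j‖) (d : ℕ) (x : ℝ) :
    HD (W β (d + 1)) (C (I / 2) * (W β d x - 2 * X * W β (d + 1) x)) x := by
  intro n
  have hg : ∀ m : ι, ((m : ℤ) : ℂ) * g β (d + 1) n m =
      coeff n (b β m * (R d m - 2 * (X * R (d + 1) m))) := by
    intro m
    rw [← R_rec, g, ← PowerSeries.coeff_C_mul]
    congr 1; ring
  rw [PowerSeries.coeff_C_mul, mul_assoc, map_sub, ← map_ofNat C 2, PowerSeries.coeff_C_mul]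
  simp only [W, coeff_mk]
  rcases n with _ | n
  · have hg' : ∀ m : ι, ((m : ℤ) : ℂ) * g β (d + 1) 0 m = g β d 0 m := by
      intro m
      rw [hg, g, mul_sub, map_sub, show b β m * (2 * (X * R (d + 1) m)) =
        X * (2 * b β m * R (d + 1) m) by ring]
      simp
    have := ser_deriv (g_summ hβ (d + 1) 0) (g_summ hβ d 0) hg' x
    simpa using this
  · have hg' : ∀ m : ι, ((m : ℤ) : ℂ) * g β (d + 1) (n + 1) m =
        g β d (n + 1) m - 2 * g β (d + 1) n m := by
      intro m
      rw [hg, g, g, mul_sub, map_sub, show b β m * (2 * (X * R (d + 1) m)) =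
        2 * (X * (b β m * R (d + 1) m)) by ring, ← map_ofNat C 2, PowerSeries.coeff_C_mul,
        PowerSeries.coeff_succ_X_mul]
    have s1 := g_summ hβ d (n + 1)
    have s2 := (g_summ hβ (d + 1) n)
    have s3 : Summable fun m => ‖g β d (n + 1) m - 2 * g β (d + 1) n m‖ :=
      (s1.of_norm.sub (s2.of_norm.mul_left 2)).norm
    have := ser_deriv (g_summ hβ (d + 1) (n + 1)) s3 hg' x
    refine this.congr_deriv ?_
    rw [PowerSeries.coeff_succ_X_mul, coeff_mk]
    congr 1
    change _ = _ - 2 * _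
    rw [← tsum_mul_left, ← Summable.tsum_sub]
    · refine tsum_congr fun m => ?_
      ring
    · exact (summ_mul s1 (norm_ex2 x)).of_norm
    · exact (summ_mul s2 (norm_ex2 x)).of_norm.mul_left 2

lemma ex_zero (m : ι) : ex 0 m = 1 := by simp [ex]

lemma ex_two_pi (m : ι) : ex (2 * Real.pi) m = (-1) ^ (m : ℤ) := by
  rw [ex, show (I * (m : ℤ) * (2 * Real.pi : ℝ) / 2 : ℂ) = (m : ℤ) * (Real.pi * I) by push_cast; ring,
    Complex.exp_int_mul, Complex.exp_pi_mul_I]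

lemma ex_neg_two_pi (m : ι) : ex (-(2 * Real.pi)) m = (-1) ^ (m : ℤ) := by
  rw [ex, show (I * (m : ℤ) * (-(2 * Real.pi) : ℝ) / 2 : ℂ) = (m : ℤ) * (-(Real.pi * I)) by
      push_cast; ring,
    Complex.exp_int_mul, Complex.exp_neg, Complex.exp_pi_mul_I]
  norm_num

lemma ex_I (x : ℝ) (m : ι) :
    I ^ (m : ℤ) * Complex.exp (I * (m : ℤ) * ((x - Real.pi : ℝ) : ℂ) / 2) = ex x m := by
  nth_rw 1 [← Complex.exp_pi_div_two_mul_I]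
  rw [← Complex.exp_int_mul, ← Complex.exp_add, ex]
  congr 1; push_cast; ring

lemma ex_negI (x : ℝ) (m : ι) :
    (-I) ^ (m : ℤ) * Complex.exp (I * (m : ℤ) * ((x - (-Real.pi) : ℝ) : ℂ) / 2) = ex x m := by
  nth_rw 1 [← Complex.exp_neg_pi_div_two_mul_I]
  rw [← Complex.exp_int_mul, ← Complex.exp_add, ex]
  congr 1; push_cast; ring

/-- Truncated coefficients. -/
noncomputable def bt (β : ℤ → ℕ → ℕ → ℝ) (c : ℕ → ℕ) (η : ℕ) (m : ℤ) (j : ℕ) : ℂ :=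
  if j ≤ c η then ((β m j η : ℝ) : ℂ) else 0

lemma bt_of_le (β : ℤ → ℕ → ℕ → ℝ) (c : ℕ → ℕ) (η : ℕ) (m : ℤ) {j : ℕ} (h : j ≤ c η) :
    bt β c η m j = ((β m j η : ℝ) : ℂ) := if_pos h

noncomputable def A (α : ℤ → ℂ) (d : ℕ) (x : ℝ) : ℂ := ∑' m : ι, ex x m * (α m / ((m : ℤ) : ℂ) ^ d)

lemma Rpm_eq (h : ℕ) (α : ℤ → ℂ) (β : ℤ → ℕ → ℕ → ℝ) (c : ℕ → ℕ) (ε : ℂ) (s : ℝ)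
    (he : ∀ (x : ℝ) (m : ι),
      ε ^ (m : ℤ) * Complex.exp (I * (m : ℤ) * ((x - s : ℝ) : ℂ) / 2) = ex x m) (x : ℝ) :
    A α 0 x - F (Finset.Icc 1 h) c (fun η => W (bt β c η)) s 0 x = Rpm h c α β ε (x - s) := by
  unfold Rpm
  congr 1
  · refine tsum_congr fun m => ?_
    rw [← he x m, pow_zero, div_one]; ring
  · rw [F, Finset.mul_sum]
    refine Finset.sum_congr rfl fun η _ => ?_
    rw [mul_assoc, ← map_ofNat C 2, PowerSeries.coeff_C_mul, mul_comm Ph, PowerSeries.coeff_mul,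
      Finset.Nat.sum_antidiagonal_eq_sum_range_succ_mk]
    refine congrArg _ (Finset.sum_congr rfl fun k hk => ?_)
    have hk : k ≤ c η := by simpa [Nat.lt_succ_iff] using hk
    rw [mul_comm, PowerSeries.coeff_mul, Finset.Nat.sum_antidiagonal_eq_sum_range_succ_mk]
    simp only [Ph, coeff_mk]
    refine congrArg _ (Finset.sum_congr rfl fun ξ _ => ?_)
    rw [coeff_E]
    simp only [W, coeff_mk]
    have : ∀ m : ι, ex x m * g (bt β c η) 0 (k - ξ) m = ε ^ (m : ℤ) * ((β m (k - ξ) η : ℝ) : ℂ) *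
        Complex.exp (I * (m : ℤ) * ((x - s : ℝ) : ℂ) / 2) := by
      intro m
      rw [g, R_zero, mul_one, b, coeff_mk, bt_of_le _ _ _ _ (by omega), ← he x m]
      ring
    rw [tsum_congr this]
    push_cast
    ring

lemma norm_pm (ε : ℂ) (hε : ‖ε‖ = 1) (m : ℤ) (z : ℂ) (θ : ℝ) :
    ‖ε ^ m * z * Complex.exp (I * m * θ / 2)‖ = ‖z‖ := by
  rw [norm_mul, norm_mul, norm_zpow, hε, one_zpow, one_mul,
    show (I * m * θ / 2 : ℂ) = ((m * θ / 2 : ℝ) : ℂ) * I by push_cast; ring,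
    Complex.norm_exp_ofReal_mul_I, mul_one]

lemma norm_sgn (m : ℤ) : ‖(-1 : ℂ) ^ m‖ = 1 := by simp

lemma norm_sgn_add (m : ι) : ‖(-1 : ℂ) ^ (m : ℤ) + 1‖ ≤ 2 :=
  (norm_add_le _ _).trans (by rw [norm_sgn]; norm_num)

lemma norm_sgn_sub (m : ι) : ‖(-1 : ℂ) ^ (m : ℤ) - 1‖ ≤ 2 :=
  (norm_sub_le _ _).trans (by rw [norm_sgn]; norm_num)

lemma Zh_mk : Zh = PowerSeries.mk fun n => if Even n then riemannZeta n * ((2 : ℂ) ^ n)⁻¹ else 0 := by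
  ext n
  simp only [Zh, Z, PowerSeries.coeff_rescale, coeff_mk]
  split_ifs <;> simp [mul_comm]

lemma ZZh_mk : Z - Zh = PowerSeries.mk fun n =>
    if Even n then riemannZeta n * (1 - ((2 : ℂ) ^ n)⁻¹) else 0 := by
  ext n
  rw [Zh_mk, map_sub, Z]
  simp only [coeff_mk]
  split_ifs <;> ring

end L44

open L44 in
theorem lemma44 (h : ℕ) (hh : 1 ≤ h) (α : ℤ → ℂ) (β : ℤ → ℕ → ℕ → ℝ) (c : ℕ → ℕ)
    (hc : ∀ η ∈ Finset.Icc 1 h, 1 ≤ c η)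
    (habsα : ∀ ε ∈ ({Complex.I, -Complex.I} : Set ℂ), ∀ θ ∈ Set.Icc (-Real.pi) Real.pi,
      Summable (fun m : {m : ℤ // m ≠ 0} =>
        ‖ε ^ (m : ℤ) * α m * Complex.exp (Complex.I * (m : ℤ) * θ / 2)‖))
    (habsβ : ∀ ε ∈ ({Complex.I, -Complex.I} : Set ℂ), ∀ θ ∈ Set.Icc (-Real.pi) Real.pi,
      ∀ η ∈ Finset.Icc 1 h, ∀ j ≤ c η,
      Summable (fun m : {m : ℤ // m ≠ 0} =>
        ‖ε ^ (m : ℤ) * ((β m j η : ℝ) : ℂ) * Complex.exp (Complex.I * (m : ℤ) * θ / 2)‖))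
    (hconst : ∀ ε ∈ ({Complex.I, -Complex.I} : Set ℂ), ∃ C : ℂ,
      ∀ θ ∈ Set.Icc (-Real.pi) Real.pi, Rpm h c α β ε θ = C) :
    ∀ d : ℕ, 1 ≤ d →
      (Summable (fun m : {m : ℤ // m ≠ 0} => ‖α m / ((m : ℤ) : ℂ) ^ (d : ℤ)‖)) ∧
      (∀ η ∈ Finset.Icc 1 h, ∀ k ∈ Finset.range (c η / 2 + 1),
        ∀ ω ∈ Finset.range (c η - 2 * k + 1),
        Summable (fun m : {m : ℤ // m ≠ 0} =>
          ‖((β m (c η - 2 * k - ω) η : ℝ) : ℂ) / ((m : ℤ) : ℂ) ^ ((d : ℤ) + ω)‖)) ∧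
      (∀ η ∈ Finset.Icc 1 h, ∀ k ∈ Finset.range (d / 2 + 1), ∀ ω ∈ Finset.range (c η),
        Summable (fun m : {m : ℤ // m ≠ 0} =>
          ‖(((-1 : ℂ) ^ (m : ℤ) + 1) * ((β m (c η - 1 - ω) η : ℝ) : ℂ)) /
            ((m : ℤ) : ℂ) ^ ((d : ℤ) - 2 * k + ω + 1)‖)) ∧
      (∀ η ∈ Finset.Icc 1 h, ∀ k ∈ Finset.range ((d + 1) / 2 + 1), ∀ ω ∈ Finset.range (c η),
        Summable (fun m : {m : ℤ // m ≠ 0} =>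
          ‖(((-1 : ℂ) ^ (m : ℤ) - 1) * ((β m (c η - 1 - ω) η : ℝ) : ℂ)) /
            ((m : ℤ) : ℂ) ^ ((d : ℤ) - 2 * k + ω + 1)‖)) ∧
      (∑' m : {m : ℤ // m ≠ 0}, α m / ((m : ℤ) : ℂ) ^ (d : ℤ)) -
        2 * (∑ η ∈ Finset.Icc 1 h, ∑ k ∈ Finset.range (c η / 2 + 1),
          riemannZeta (2 * k) *
            ∑ ω ∈ Finset.range (c η - 2 * k + 1),
              (genBinom ((ω : ℤ) + d - 1) ω : ℂ) * (-2 : ℂ) ^ ω *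
                ∑' m : {m : ℤ // m ≠ 0},
                  ((β m (c η - 2 * k - ω) η : ℝ) : ℂ) / ((m : ℤ) : ℂ) ^ ((d : ℤ) + ω)) +
        2 * (∑ η ∈ Finset.Icc 1 h, ∑ k ∈ Finset.range (d / 2 + 1),
          riemannZeta (2 * k) * ((2 : ℂ) ^ (2 * k))⁻¹ *
            ∑ ω ∈ Finset.range (c η),
              (genBinom ((ω : ℤ) + d - 2 * k) ω : ℂ) * (-2 : ℂ) ^ ω *
                ∑' m : {m : ℤ // m ≠ 0},
                  (((-1 : ℂ) ^ (m : ℤ) + 1) * ((β m (c η - 1 - ω) η : ℝ) : ℂ)) /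
                    ((m : ℤ) : ℂ) ^ ((d : ℤ) - 2 * k + ω + 1)) -
        2 * (∑ η ∈ Finset.Icc 1 h, ∑ k ∈ Finset.range ((d + 1) / 2 + 1),
          riemannZeta (2 * k) * (1 - ((2 : ℂ) ^ (2 * k))⁻¹) *
            ∑ ω ∈ Finset.range (c η),
              (genBinom ((ω : ℤ) + d - 2 * k) ω : ℂ) * (-2 : ℂ) ^ ω *
                ∑' m : {m : ℤ // m ≠ 0},
                  (((-1 : ℂ) ^ (m : ℤ) - 1) * ((β m (c η - 1 - ω) η : ℝ) : ℂ)) /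
                    ((m : ℤ) : ℂ) ^ ((d : ℤ) - 2 * k + ω + 1)) = 0 := by
  have hα : Summable fun m : ι => ‖α m‖ := by
    have := habsα I (by simp) 0 ⟨by linarith [Real.pi_pos], Real.pi_pos.le⟩
    refine this.congr fun m => ?_
    exact norm_pm I (by simp) _ _ 0
  have hβ : ∀ η ∈ Finset.Icc 1 h, ∀ j ≤ c η, Summable fun m : ι => ‖((β m j η : ℝ) : ℂ)‖ := by
    intro η hη j hj
    have := habsβ I (by simp) 0 ⟨by linarith [Real.pi_pos], Real.pi_pos.le⟩ η hη j hj
    refine this.congr fun m => ?_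
    exact norm_pm I (by simp) _ _ 0
  have hbt : ∀ η ∈ Finset.Icc 1 h, ∀ j, Summable fun m : ι => ‖bt β c η m j‖ := by
    intro η hη j
    by_cases hj : j ≤ c η
    · simpa only [bt_of_le _ _ _ _ hj] using hβ η hη j hj
    · simp only [bt, if_neg hj, norm_zero]
      exact summable_zero
  intro d hd
  refine ⟨?_, ?_, ?_, ?_, ?_⟩
  · simpa only [zpow_natCast] using summ_div hα d
  · intro η hη k _ ω _
    have := summ_div (hβ η hη (c η - 2 * k - ω) (by omega)) (d + ω)
    simpa only [← zpow_natCast, Nat.cast_add] using this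
  · intro η hη k hk ω _
    have hk : 2 * k ≤ d := by have := Finset.mem_range.1 hk; omega
    have := summ_div (summ_mul (hβ η hη (c η - 1 - ω) (by omega)) norm_sgn_add) (d - 2 * k + ω + 1)
    have e : ((d : ℤ) - 2 * k + ω + 1) = ((d - 2 * k + ω + 1 : ℕ) : ℤ) := by omega
    simpa only [e, zpow_natCast] using this
  · intro η hη k hk ω _
    have hk : 2 * k ≤ d + 1 := by have := Finset.mem_range.1 hk; omega
    have := summ_div (summ_mul (hβ η hη (c η - 1 - ω) (by omega)) norm_sgn_sub) (d + 1 - 2 * k + ω)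
    have e : ((d : ℤ) - 2 * k + ω + 1) = ((d + 1 - 2 * k + ω : ℕ) : ℤ) := by omega
    simpa only [e, zpow_natCast] using this
  have hpi := Real.pi_pos
  obtain ⟨h00, hcore⟩ := core (Finset.Icc 1 h) c hc (A α) (fun η => W (bt β c η))
    (fun d x => ser_deriv (summ_div hα (d + 1)) (summ_div hα d) (fun m => by
      have := mne m
      rw [pow_succ]; field_simp) x)
    (fun η hη d x => W_deriv (hbt η hη) d x)
    (fun d => by simp only [A, ex_two_pi, ex_neg_two_pi])
    (fun η _ d => by simp only [W, ex_two_pi, ex_neg_two_pi])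
    (by
      obtain ⟨K, hK⟩ := hconst I (by simp)
      refine ⟨K, fun x hx => ?_⟩
      rw [Rpm_eq h α β c I Real.pi ex_I x]
      exact hK _ ⟨by linarith [hx.1], by linarith [hx.2]⟩)
    (by
      obtain ⟨K, hK⟩ := hconst (-I) (by simp)
      refine ⟨K, fun x hx => ?_⟩
      rw [Rpm_eq h α β c (-I) (-Real.pi) ex_negI x]
      exact hK _ ⟨by linarith [hx.1], by linarith [hx.2]⟩)
    _ _ rfl rfl
  set s0 : PowerSeries ℂ := PowerSeries.mk fun d =>
    ∑ η ∈ Finset.Icc 1 h, PowerSeries.coeff (c η - 1) (W (bt β c η) d 0) with hs0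
  set s1 : PowerSeries ℂ := PowerSeries.mk fun d =>
    ∑ η ∈ Finset.Icc 1 h, PowerSeries.coeff (c η - 1) (W (bt β c η) d (2 * Real.pi)) with hs1
  have hadd : ∀ e : ℕ, PowerSeries.coeff e (s1 + s0) = ∑ η ∈ Finset.Icc 1 h,
      ∑ ω ∈ Finset.range (c η), (genBinom ((ω : ℤ) + e - 1) ω : ℂ) * (-2 : ℂ) ^ ω *
        ∑' m : ι, (((-1 : ℂ) ^ (m : ℤ) + 1) * ((β m (c η - 1 - ω) η : ℝ) : ℂ)) /
          ((m : ℤ) : ℂ) ^ (e + ω) := by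
    intro e
    rw [map_add, hs0, hs1, PowerSeries.coeff_mk, PowerSeries.coeff_mk, ← Finset.sum_add_distrib]
    refine Finset.sum_congr rfl fun η hη => ?_
    have hcη := hc η hη
    simp only [W, PowerSeries.coeff_mk]
    rw [← Summable.tsum_add (summ_mul (g_summ (hbt η hη) _ _) (norm_ex2 _)).of_norm
      (summ_mul (g_summ (hbt η hη) _ _) (norm_ex2 _)).of_norm]
    simp only [ex_two_pi, ex_zero, ← add_mul]
    rw [V_eq (hbt η hη) _ norm_sgn_add, Nat.sub_add_cancel hcη]
    refine Finset.sum_congr rfl fun ω _ => ?_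
    simp only [bt_of_le β c η _ (show c η - 1 - ω ≤ c η by omega)]
  have hsub : ∀ e : ℕ, PowerSeries.coeff e (s1 - s0) = ∑ η ∈ Finset.Icc 1 h,
      ∑ ω ∈ Finset.range (c η), (genBinom ((ω : ℤ) + e - 1) ω : ℂ) * (-2 : ℂ) ^ ω *
        ∑' m : ι, (((-1 : ℂ) ^ (m : ℤ) - 1) * ((β m (c η - 1 - ω) η : ℝ) : ℂ)) /
          ((m : ℤ) : ℂ) ^ (e + ω) := by
    intro e
    rw [map_sub, hs0, hs1, PowerSeries.coeff_mk, PowerSeries.coeff_mk, ← Finset.sum_sub_distrib]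
    refine Finset.sum_congr rfl fun η hη => ?_
    have hcη := hc η hη
    simp only [W, PowerSeries.coeff_mk]
    rw [← Summable.tsum_sub (summ_mul (g_summ (hbt η hη) _ _) (norm_ex2 _)).of_norm
      (summ_mul (g_summ (hbt η hη) _ _) (norm_ex2 _)).of_norm]
    simp only [ex_two_pi, ex_zero, ← sub_mul]
    rw [V_eq (hbt η hη) _ norm_sgn_sub, Nat.sub_add_cancel hcη]
    refine Finset.sum_congr rfl fun ω _ => ?_
    simp only [bt_of_le β c η _ (show c η - 1 - ω ≤ c η by omega)]
  have t1 : (∑' m : {m : ℤ // m ≠ 0}, α m / ((m : ℤ) : ℂ) ^ (d : ℤ)) = A α d 0 := by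
    refine tsum_congr fun m => ?_
    rw [ex_zero, one_mul, zpow_natCast]
  have t2 : (∑ η ∈ Finset.Icc 1 h, ∑ k ∈ Finset.range (c η / 2 + 1),
          riemannZeta (2 * k) *
            ∑ ω ∈ Finset.range (c η - 2 * k + 1),
              (genBinom ((ω : ℤ) + d - 1) ω : ℂ) * (-2 : ℂ) ^ ω *
                ∑' m : {m : ℤ // m ≠ 0},
                  ((β m (c η - 2 * k - ω) η : ℝ) : ℂ) / ((m : ℤ) : ℂ) ^ ((d : ℤ) + ω)) =
      ∑ η ∈ Finset.Icc 1 h, PowerSeries.coeff (c η) (Z * W (bt β c η) d 0) := by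
    refine Finset.sum_congr rfl fun η hη => ?_
    rw [Z, coeff_even]
    refine Finset.sum_congr rfl fun k _ => ?_
    rw [W, PowerSeries.coeff_mk, V_eq (hbt η hη) _ (norm_ex2 0)]
    push_cast
    refine congrArg _ (Finset.sum_congr rfl fun ω _ => ?_)
    refine congrArg _ (tsum_congr fun m => ?_)
    rw [ex_zero, one_mul, bt_of_le _ _ _ _ (by omega), ← Nat.cast_add, zpow_natCast]
  have t3 : (∑ η ∈ Finset.Icc 1 h, ∑ k ∈ Finset.range (d / 2 + 1),
          riemannZeta (2 * k) * ((2 : ℂ) ^ (2 * k))⁻¹ *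
            ∑ ω ∈ Finset.range (c η),
              (genBinom ((ω : ℤ) + d - 2 * k) ω : ℂ) * (-2 : ℂ) ^ ω *
                ∑' m : {m : ℤ // m ≠ 0},
                  (((-1 : ℂ) ^ (m : ℤ) + 1) * ((β m (c η - 1 - ω) η : ℝ) : ℂ)) /
                    ((m : ℤ) : ℂ) ^ ((d : ℤ) - 2 * k + ω + 1)) =
      PowerSeries.coeff (d + 1) (Zh * (s1 + s0)) := by
    rw [Zh_mk, coeff_even, Finset.sum_comm]
    have hext : ∑ k ∈ Finset.range ((d + 1) / 2 + 1), riemannZeta ((2 * k : ℕ) : ℂ) *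
        ((2 : ℂ) ^ (2 * k))⁻¹ * PowerSeries.coeff (d + 1 - 2 * k) (s1 + s0) =
        ∑ k ∈ Finset.range (d / 2 + 1), riemannZeta ((2 * k : ℕ) : ℂ) *
        ((2 : ℂ) ^ (2 * k))⁻¹ * PowerSeries.coeff (d + 1 - 2 * k) (s1 + s0) := by
      symm
      refine Finset.sum_subset (Finset.range_mono (by omega)) fun k hk hk' => ?_
      rw [Finset.mem_range] at hk hk'
      rw [show d + 1 - 2 * k = 0 by omega, h00, mul_zero]
    rw [hext]
    refine Finset.sum_congr rfl fun k hk => ?_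
    have hk : 2 * k ≤ d := by have := Finset.mem_range.1 hk; omega
    rw [← Finset.mul_sum, hadd]
    push_cast
    refine congrArg _ (Finset.sum_congr rfl fun η _ => Finset.sum_congr rfl fun ω _ => ?_)
    rw [show ((d : ℤ) - 2 * k + ω + 1) = ((d + 1 - 2 * k + ω : ℕ) : ℤ) by omega,
      show ((ω : ℤ) + d - 2 * k) = (ω : ℤ) + ((d + 1 - 2 * k : ℕ) : ℤ) - 1 by omega]
    simp only [zpow_natCast]
  have t4 : (∑ η ∈ Finset.Icc 1 h, ∑ k ∈ Finset.range ((d + 1) / 2 + 1),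
          riemannZeta (2 * k) * (1 - ((2 : ℂ) ^ (2 * k))⁻¹) *
            ∑ ω ∈ Finset.range (c η),
              (genBinom ((ω : ℤ) + d - 2 * k) ω : ℂ) * (-2 : ℂ) ^ ω *
                ∑' m : {m : ℤ // m ≠ 0},
                  (((-1 : ℂ) ^ (m : ℤ) - 1) * ((β m (c η - 1 - ω) η : ℝ) : ℂ)) /
                    ((m : ℤ) : ℂ) ^ ((d : ℤ) - 2 * k + ω + 1)) =
      PowerSeries.coeff (d + 1) ((Z - Zh) * (s1 - s0)) := by
    rw [ZZh_mk, coeff_even, Finset.sum_comm]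
    refine Finset.sum_congr rfl fun k hk => ?_
    have hk : 2 * k ≤ d + 1 := by have := Finset.mem_range.1 hk; omega
    rw [← Finset.mul_sum, hsub]
    push_cast
    refine congrArg _ (Finset.sum_congr rfl fun η _ => Finset.sum_congr rfl fun ω _ => ?_)
    rw [show ((d : ℤ) - 2 * k + ω + 1) = ((d + 1 - 2 * k + ω : ℕ) : ℤ) by omega,
      show ((ω : ℤ) + d - 2 * k) = (ω : ℤ) + ((d + 1 - 2 * k : ℕ) : ℤ) - 1 by omega]
    simp only [zpow_natCast]
  rw [t1, t2, t3, t4]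
  have hd2 := hcore d
  have h4 : ∀ n (P : PowerSeries ℂ), PowerSeries.coeff n (4 * P) = 4 * PowerSeries.coeff n P := by
    intro n P
    rw [← map_ofNat PowerSeries.C 4, PowerSeries.coeff_C_mul]
  simp only [neg_mul, map_add, map_neg, h4, ← Finset.mul_sum] at hd2
  linear_combination hd2 / 2
end

section
/- Let p, q, r, u, v be positive integers and set w = p + q + r + u + v. Then there exist rational numbers c_k and d_k (0 ≤ k ≤ ⌊(w+1)/2⌋) depending only on (p,q,r,u,v) such that for every complex number s with Re s > 1: ζ₂(p,s,q,r,u,v; G₂) + (−1)^p ζ₂(p,q,s,r,v,u; G₂) + (−1)^{p+q} ζ₂(v,q,r,s,p,u; G₂) + (−1)^{p+q+v} ζ₂(v,r,q,s,u,p; G₂) + (−1)^{p+q+r+v} ζ₂(u,r,s,q,v,p; G₂) + (−1)^{p+q+r+u+v} ζ₂(u,s,r,q,p,v; G₂) = ∑_{k=0}^{⌊(w+1)/2⌋} ζ(2k)·( c_k·ζ(s+w−2k) + d_k·φ(s+w−2k) ). -/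
open Complex Finset

/-- The zeta-function of the root system `G₂` with complex exponents. -/
noncomputable def zetaG2C (s₁ s₂ s₃ s₄ s₅ s₆ : ℂ) : ℂ :=
  ∑' (m : ℕ+) (n : ℕ+),
    1 / (((m : ℕ) : ℂ) ^ s₁ * ((n : ℕ) : ℂ) ^ s₂ * (((m : ℕ) : ℂ) + ((n : ℕ) : ℂ)) ^ s₃ *
      (((m : ℕ) : ℂ) + 2 * ((n : ℕ) : ℂ)) ^ s₄ * (((m : ℕ) : ℂ) + 3 * ((n : ℕ) : ℂ)) ^ s₅ *
      (2 * ((m : ℕ) : ℂ) + 3 * ((n : ℕ) : ℂ)) ^ s₆)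

/-- `φ(s) = (2^{1-s} - 1) ζ(s)`. -/
noncomputable def phiC (s : ℂ) : ℂ := ((2 : ℂ) ^ (1 - s) - 1) * riemannZeta s

open Filter Topology


def gal : Fin 5 → ℤ := ![1, 1, 1, 1, 2]
def gbe : Fin 5 → ℤ := ![0, 1, 2, 3, 3]
def gL (i : Fin 5) (N : ℕ) (M : ℤ) : ℤ := gal i * M + gbe i * N

noncomputable def gchi (N : ℕ) (M : ℤ) : ℂ := if ∀ i, gL i N M ≠ 0 then 1 else 0

noncomputable def gE (e : Fin 5 → ℕ) (N : ℕ) (M : ℤ) : ℂ := ∏ i, (((gL i N M : ℤ) : ℂ)⁻¹) ^ (e i)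

/-- the symmetric sums of `g` have limit of the required shape. -/
def GP (B w : ℕ) (g : ℕ → ℤ → ℂ) : Prop :=
  ∃ c d : ℕ → ℚ, ∀ N : ℕ, 0 < N →
    Tendsto (fun K : ℕ => ∑ M ∈ Finset.Icc (-(K : ℤ)) K, g N M) atTop
      (𝓝 (∑ k ∈ Finset.range B, riemannZeta (2 * k) * ((c k : ℂ) + (d k : ℂ) * (-1) ^ N) *
        (N : ℂ) ^ (2 * k) * ((N : ℂ)⁻¹) ^ w))

lemma GP.add {B w : ℕ} {g h : ℕ → ℤ → ℂ} (hg : GP B w g) (hh : GP B w h) :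
    GP B w (fun N M => g N M + h N M) := by
  obtain ⟨c, d, h1⟩ := hg
  obtain ⟨c', d', h2⟩ := hh
  refine ⟨fun k => c k + c' k, fun k => d k + d' k, fun N hN => ?_⟩
  have := (h1 N hN).add (h2 N hN)
  simp only [Finset.sum_add_distrib]
  convert this using 2
  rw [← Finset.sum_add_distrib]
  refine Finset.sum_congr rfl fun k _ => ?_
  push_cast; ring

lemma GP.smul {B w : ℕ} {g : ℕ → ℤ → ℂ} (a : ℚ) (hg : GP B w g) :
    GP B w (fun N M => (a : ℂ) * g N M) := by
  obtain ⟨c, d, h1⟩ := hg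
  refine ⟨fun k => a * c k, fun k => a * d k, fun N hN => ?_⟩
  have := (h1 N hN).const_mul (a : ℂ)
  simp only [← Finset.mul_sum]
  convert this using 2
  rw [Finset.mul_sum]
  refine Finset.sum_congr rfl fun k _ => ?_
  push_cast; ring

lemma GP.divN {B w : ℕ} {g : ℕ → ℤ → ℂ} (hg : GP B w g) :
    GP B (w + 1) (fun N M => (N : ℂ)⁻¹ * g N M) := by
  obtain ⟨c, d, h1⟩ := hg
  refine ⟨c, d, fun N hN => ?_⟩
  have := (h1 N hN).const_mul ((N : ℂ)⁻¹)
  simp only [← Finset.mul_sum]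
  convert this using 2
  rw [Finset.mul_sum]
  refine Finset.sum_congr rfl fun k _ => ?_
  ring

lemma GP.congr {B w : ℕ} {g h : ℕ → ℤ → ℂ} (hg : GP B w g)
    (H : ∀ N : ℕ, 0 < N → ∀ M : ℤ, g N M = h N M) : GP B w h := by
  obtain ⟨c, d, h1⟩ := hg
  refine ⟨c, d, fun N hN => ?_⟩
  have := h1 N hN
  simpa only [H N hN] using this

/-- sums with a finite support -/
lemma GP.point {B w : ℕ} (hB : 0 < B) (g : ℕ → ℤ → ℂ) (a b : ℚ)
    (t : ℕ → ℤ) (ht : ∀ N M, M ≠ t N → g N M = 0)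
    (hv : ∀ N : ℕ, 0 < N → g N (t N) = ((a : ℂ) + b * (-1) ^ N) * ((N : ℂ)⁻¹) ^ w) :
    GP B w g := by
  refine ⟨fun k => if k = 0 then -2 * a else 0, fun k => if k = 0 then -2 * b else 0,
    fun N hN => ?_⟩
  apply tendsto_const_nhds.congr'
  filter_upwards [eventually_ge_atTop (t N).natAbs] with K hK
  rw [Finset.sum_eq_single (t N)]
  · rw [hv N hN, Finset.sum_eq_single 0]
    · simp only [if_true, Nat.cast_zero, mul_zero, riemannZeta_zero, pow_zero]
      push_cast; ring
    · intro k _ hk; simp [hk]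
    · intro h; simp at h; omega
  · intro M _ hM; exact ht N M hM
  · intro h; exfalso; apply h; rw [Finset.mem_Icc]; omega

lemma gchi_eq (N : ℕ) (hN : 0 < N) (M : ℤ) :
    gchi N M = 1 - (if M = 0 then 1 else 0) - (if M = -N then 1 else 0)
      - (if M = -2 * N then 1 else 0) - (if M = -3 * N then 1 else 0)
      - (if 2 * M + 3 * N = 0 then 1 else 0) := by
  have h : (∀ i, gL i N M ≠ 0) ↔ (M ≠ 0 ∧ M ≠ -N ∧ M ≠ -2 * N ∧ M ≠ -3 * N ∧ 2 * M + 3 * N ≠ 0) := by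
    simp only [Fin.forall_fin_succ, gL, gal, gbe]
    simp
    omega
  unfold gchi
  simp only [h]
  clear h
  split_ifs <;> first | (exfalso; omega) | norm_num

lemma tendsto_sum_shift {h : ℤ → ℂ} {l : ℂ} (h1 : Tendsto h atTop (𝓝 0)) (h2 : Tendsto h atBot (𝓝 0))
    (hl : Tendsto (fun K : ℕ => ∑ M ∈ Finset.Icc (-(K : ℤ)) K, h M) atTop (𝓝 l)) (b : ℕ) :
    Tendsto (fun K : ℕ => ∑ M ∈ Finset.Icc (-(K : ℤ)) K, h (M + b)) atTop (𝓝 l) := by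
  induction b with
  | zero => simpa using hl
  | succ b ih =>
    have e : ∀ K : ℕ, ∑ M ∈ Finset.Icc (-(K : ℤ)) K, h (M + (b + 1 : ℕ)) =
        ∑ M ∈ Finset.Icc (-(K : ℤ)) K, h (M + b) + (h (K + (b + 1 : ℕ)) - h (-K + b)) := by
      intro K
      have e1 : ∑ M ∈ Finset.Icc (-(K : ℤ)) K, h (M + (b + 1 : ℕ)) =
          ∑ M ∈ Finset.Icc (-(K : ℤ) + 1) (K + 1), h (M + b) := by
        rw [← Finset.image_add_right_Icc, Finset.sum_image]
        · refine Finset.sum_congr rfl fun M _ => ?_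
          congr 1; push_cast; ring
        · intro x _ y _ hxy; simpa using hxy
      have e2 : Finset.Icc (-(K : ℤ)) (K + 1) = insert (-(K : ℤ)) (Finset.Icc (-(K : ℤ) + 1) (K + 1)) := by
        ext x; simp; omega
      have e3 : Finset.Icc (-(K : ℤ)) (K + 1) = insert ((K : ℤ) + 1) (Finset.Icc (-(K : ℤ)) K) := by
        ext x; simp; omega
      have e4 := Finset.sum_insert (s := Finset.Icc (-(K : ℤ) + 1) (K + 1)) (a := -(K : ℤ))
        (f := fun M => h (M + b)) (by simp)
      have e5 := Finset.sum_insert (s := Finset.Icc (-(K : ℤ)) K) (a := (K : ℤ) + 1)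
        (f := fun M => h (M + b)) (by simp)
      rw [← e2] at e4
      rw [← e3] at e5
      rw [e1]
      have : (K : ℤ) + (b + 1 : ℕ) = K + 1 + b := by push_cast; ring
      rw [this]
      linear_combination e5 - e4
    simp only [e]
    have hK : Tendsto (fun K : ℕ => (K : ℤ)) atTop atTop := tendsto_natCast_atTop_atTop
    have t1 : Tendsto (fun K : ℕ => h (K + (b + 1 : ℕ))) atTop (𝓝 0) :=
      h1.comp (tendsto_atTop_add_const_right _ _ hK)
    have t2 : Tendsto (fun K : ℕ => h (-K + b)) atTop (𝓝 0) :=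
      h2.comp (tendsto_atBot_add_const_right _ _ (tendsto_neg_atTop_atBot.comp hK))
    simpa using ih.add (t1.sub t2)

lemma gE_add_single (e : Fin 5 → ℕ) (i : Fin 5) (N : ℕ) (M : ℤ) :
    gE (e + Pi.single i 1) N M = gE e N M * ((gL i N M : ℤ) : ℂ)⁻¹ := by
  simp only [gE, Pi.add_apply, pow_add, Finset.prod_mul_distrib]
  congr 1
  rw [Finset.prod_eq_single i]
  · simp
  · intro j _ hj; simp [Pi.single_eq_of_ne hj]
  · simp

lemma gE_single (n : ℕ) (i : Fin 5) (N : ℕ) (M : ℤ) :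
    gE (Pi.single i n) N M = ((gL i N M : ℤ) : ℂ)⁻¹ ^ n := by
  simp only [gE]
  rw [Finset.prod_eq_single i]
  · simp
  · intro j _ hj; simp [Pi.single_eq_of_ne hj]
  · simp

lemma gD_ne (i j : Fin 5) (h : i ≠ j) : gal j * gbe i - gal i * gbe j ≠ 0 := by
  revert i j; decide

lemma GP_gE (B : ℕ) (hbase : ∀ i : Fin 5, ∀ n, 0 < n → n / 2 < B →
      GP B n (fun N M => gchi N M * ((gL i N M : ℤ) : ℂ)⁻¹ ^ n)) :
    ∀ n : ℕ, ∀ e : Fin 5 → ℕ, ∑ i, e i = n → 0 < n → n / 2 < B →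
      GP B n (fun N M => gchi N M * gE e N M) := by
  intro n
  induction n with
  | zero => intro e _ h; omega
  | succ n ih =>
    intro e he _ hn
    by_cases hc : ∃ i j, i ≠ j ∧ 0 < e i ∧ 0 < e j
    · obtain ⟨i, j, hij, hi, hj⟩ := hc
      obtain ⟨e', rfl⟩ : ∃ e' : Fin 5 → ℕ, e = e' + Pi.single i 1 + Pi.single j 1 := by
        refine ⟨e - Pi.single i 1 - Pi.single j 1, ?_⟩
        ext k
        simp only [Pi.add_apply, Pi.sub_apply]
        by_cases hki : k = i
        · subst hki; simp [Pi.single_eq_of_ne hij]; omega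
        · by_cases hkj : k = j
          · subst hkj; simp [Pi.single_eq_of_ne hki]; omega
          · simp [Pi.single_eq_of_ne hki, Pi.single_eq_of_ne hkj]
      simp only [Pi.add_apply, Finset.sum_add_distrib, Finset.sum_pi_single', Finset.mem_univ, if_true] at he
      have s1 : ∑ k, (e' + Pi.single i 1 : Fin 5 → ℕ) k = n := by
        simp [Finset.sum_add_distrib]; simp at he; omega
      have s2 : ∑ k, (e' + Pi.single j 1 : Fin 5 → ℕ) k = n := by
        simp [Finset.sum_add_distrib]; simp at he; omega
      have hn0 : 0 < n := by
        rw [← s1]; simp [Finset.sum_add_distrib]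
      have g1 := ih _ s1 hn0 (by omega)
      have g2 := ih _ s2 hn0 (by omega)
      have hD := gD_ne i j hij
      set D := gal j * gbe i - gal i * gbe j with hDdef
      refine (((g1.smul (-gal i / D : ℚ)).divN).add ((g2.smul (gal j / D : ℚ)).divN)).congr ?_
      intro N hN M
      have hNc : (N : ℂ) ≠ 0 := by exact_mod_cast hN.ne'
      have hDc : (D : ℂ) ≠ 0 := by exact_mod_cast hD
      by_cases hx : ∀ k, gL k N M ≠ 0
      · have hi : ((gL i N M : ℤ) : ℂ) ≠ 0 := by exact_mod_cast hx i
        have hj : ((gL j N M : ℤ) : ℂ) ≠ 0 := by exact_mod_cast hx j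
        have key : (gal j : ℂ) * (gL i N M : ℤ) - (gal i : ℂ) * (gL j N M : ℤ) = D * N := by
          rw [hDdef]; unfold gL; push_cast; ring
        simp only [gE_add_single]
        push_cast
        field_simp
        linear_combination (gchi N M * gE e' N M) * key
      · simp [gchi, if_neg hx]
    · push Not at hc
      obtain ⟨i, hi⟩ : ∃ i, 0 < e i := by
        by_contra! h
        have : ∑ i, e i = 0 := Finset.sum_eq_zero fun i _ => by have := h i; omega
        omega
      have : e = Pi.single i (n + 1) := by
        have h0 : ∀ j, j ≠ i → e j = 0 := fun j hj => by have := hc i j hj.symm hi; omega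
        rw [Finset.sum_eq_single i (fun j _ hj => h0 j hj) (by simp)] at he
        ext j
        by_cases hj : j = i
        · subst hj; simp [he]
        · simp [Pi.single_eq_of_ne hj, h0 j hj]
      subst this
      simp only [gE_single]
      exact hbase i _ (by omega) hn

lemma ginv_tendsto (n : ℕ) (hn : 0 < n) :
    Tendsto (fun M : ℤ => ((M : ℂ)⁻¹) ^ n) atTop (𝓝 0) ∧
    Tendsto (fun M : ℤ => ((M : ℂ)⁻¹) ^ n) atBot (𝓝 0) := by
  have a1 : Tendsto (fun M : ℤ => ((M : ℝ)⁻¹)) atTop (𝓝 0) :=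
    tendsto_inv_atTop_zero.comp tendsto_intCast_atTop_atTop
  have a2 : Tendsto (fun M : ℤ => ((M : ℝ)⁻¹)) atBot (𝓝 0) :=
    tendsto_inv_atBot_zero.comp (tendsto_intCast_atBot_iff.2 tendsto_id)
  constructor
  · have := (((continuous_ofReal.tendsto 0).comp a1).pow n)
    simpa [Function.comp_def, hn.ne'] using this
  · have := (((continuous_ofReal.tendsto 0).comp a2).pow n)
    simpa [Function.comp_def, hn.ne'] using this

lemma ginv_hasSum (k : ℕ) (hk : 0 < k) :
    HasSum (fun M : ℤ => ((M : ℂ)⁻¹) ^ (2 * k)) (2 * riemannZeta (2 * k)) := by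
  have h := two_mul_riemannZeta_eq_tsum_int_inv_pow_of_even (k := 2 * k) (by omega) (by simp)
  have hs : Summable (fun M : ℤ => ((M : ℂ)⁻¹) ^ (2 * k)) := by
    have : Summable (fun M : ℤ => (1 / (M : ℝ) ^ (2 * k))) :=
      Real.summable_one_div_int_pow.2 (by omega)
    have := Complex.ofRealCLM.summable this
    refine this.congr fun M => ?_
    simp
  have h2 : (2 : ℂ) * riemannZeta (2 * k) = ∑' M : ℤ, ((M : ℂ)⁻¹) ^ (2 * k) := by
    push_cast at h
    rw [h]
    refine tsum_congr fun M => ?_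
    simp
  rw [h2]
  exact hs.hasSum

lemma ginv_hasSum_odd (k : ℕ) (hk : 0 < k) :
    HasSum (fun M : ℤ => (((2 * M + 1 : ℤ) : ℂ)⁻¹) ^ (2 * k))
      (riemannZeta (2 * k) * (2 - 2 * (2⁻¹ : ℂ) ^ (2 * k))) := by
  have h := ginv_hasSum k hk
  have he : HasSum (fun M : ℤ => (((2 * M : ℤ) : ℂ)⁻¹) ^ (2 * k))
      ((2⁻¹ : ℂ) ^ (2 * k) * (2 * riemannZeta (2 * k))) := by
    have e := h.mul_left ((2⁻¹ : ℂ) ^ (2 * k))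
    simp only [← mul_pow, ← mul_inv] at e
    push_cast
    exact e
  have i2 : Function.Injective (fun M : ℤ => 2 * M) := fun a b hab => by simpa using hab
  have i1 : Function.Injective (fun M : ℤ => 2 * M + 1) := fun a b hab => by simpa using hab
  have he' : HasSum (fun M : ℤ => if Even M then ((M : ℂ)⁻¹) ^ (2 * k) else 0)
      ((2⁻¹ : ℂ) ^ (2 * k) * (2 * riemannZeta (2 * k))) := by
    rw [← i2.hasSum_iff]
    · have ef : ((fun M : ℤ => if Even M then ((M : ℂ)⁻¹) ^ (2 * k) else 0) ∘ fun M : ℤ => 2 * M) =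
          (fun M : ℤ => (((2 * M : ℤ) : ℂ)⁻¹) ^ (2 * k)) := by
        funext M
        simp only [Function.comp_apply]
        rw [if_pos (by simp)]
      rw [ef]
      exact he
    · intro x hx
      rw [if_neg]
      rintro ⟨y, hy⟩
      exact hx ⟨y, by simp only; omega⟩
  have ho := h.sub he'
  rw [← i1.hasSum_iff] at ho
  · have ef : ((fun M : ℤ => ((M : ℂ)⁻¹) ^ (2 * k) - if Even M then ((M : ℂ)⁻¹) ^ (2 * k) else 0) ∘
          fun M : ℤ => 2 * M + 1) = (fun M : ℤ => (((2 * M + 1 : ℤ) : ℂ)⁻¹) ^ (2 * k)) := by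
      funext M
      simp only [Function.comp_apply]
      rw [if_neg (by simp), sub_zero]
    rw [ef] at ho
    have ev : riemannZeta (2 * k) * (2 - 2 * (2⁻¹ : ℂ) ^ (2 * k)) =
      2 * riemannZeta (2 * k) - (2⁻¹ : ℂ) ^ (2 * k) * (2 * riemannZeta (2 * k)) := by ring
    rw [ev]
    exact ho
  · intro x hx
    rw [if_pos, sub_self]
    rcases Int.even_or_odd x with hx' | ⟨y, hy⟩
    · exact hx'
    · exact absurd ⟨y, by simp only; omega⟩ hx

lemma gsum_odd_zero (h : ℤ → ℂ) (hh : ∀ M, h (-M) = - h M) (K : ℕ) :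
    ∑ M ∈ Finset.Icc (-(K : ℤ)) K, h M = 0 := by
  have : ∑ M ∈ Finset.Icc (-(K : ℤ)) K, h M = ∑ M ∈ Finset.Icc (-(K : ℤ)) K, h (-M) := by
    refine Finset.sum_equiv (Equiv.neg ℤ) ?_ ?_
    · intro i; simp; omega
    · intro i _; simp
  simp only [hh, Finset.sum_neg_distrib] at this
  linear_combination this / 2

lemma gsum_odd_half (h : ℤ → ℂ) (hh : ∀ M, h (-1 - M) = - h M) (K : ℕ) :
    ∑ M ∈ Finset.Icc (-(K : ℤ)) K, h M = h K := by
  induction K with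
  | zero => simp
  | succ K ih =>
    have : Finset.Icc (-((K + 1 : ℕ) : ℤ)) ((K + 1 : ℕ) : ℤ) =
        insert ((K : ℤ) + 1) (insert (-1 - (K : ℤ)) (Finset.Icc (-(K : ℤ)) K)) := by
      ext x; simp; omega
    rw [this, Finset.sum_insert, Finset.sum_insert, ih, hh]
    · push_cast; ring
    · simp
    · simp; omega

/-- limit for `∑ (M + b)^{-n}` -/
lemma glim_one (n : ℕ) (hn : 0 < n) (b : ℕ) :
    Tendsto (fun K : ℕ => ∑ M ∈ Finset.Icc (-(K : ℤ)) K, (((M + b : ℤ) : ℂ)⁻¹) ^ n) atTop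
      (𝓝 (if Even n then 2 * riemannZeta n else 0)) := by
  obtain ⟨t1, t2⟩ := ginv_tendsto n hn
  refine tendsto_sum_shift (h := fun M : ℤ => ((M : ℂ)⁻¹) ^ n) t1 t2 ?_ b
  split_ifs with he
  · obtain ⟨k, hk⟩ := he
    obtain rfl : n = 2 * k := by omega
    have := (ginv_hasSum k (by omega)).comp Finset.tendsto_Icc_neg
    push_cast
    exact this
  · rw [Nat.not_even_iff_odd] at he
    simp only [gsum_odd_zero (fun M : ℤ => ((M : ℂ)⁻¹) ^ n) (fun M => by
      push_cast; rw [inv_neg, he.neg_pow])]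
    exact tendsto_const_nhds

/-- limit for `∑ (2 (M + b) + 1)^{-n}` -/
lemma glim_two (n : ℕ) (hn : 0 < n) (b : ℕ) :
    Tendsto (fun K : ℕ => ∑ M ∈ Finset.Icc (-(K : ℤ)) K, (((2 * (M + b) + 1 : ℤ) : ℂ)⁻¹) ^ n) atTop
      (𝓝 (if Even n then riemannZeta n * (2 - 2 * (2⁻¹ : ℂ) ^ n) else 0)) := by
  obtain ⟨t1, t2⟩ := ginv_tendsto n hn
  have m1 : Tendsto (fun M : ℤ => 2 * M + 1) atTop atTop :=
    tendsto_atTop_mono' _ (by filter_upwards [eventually_ge_atTop 0] with M hM; show id M ≤ _; simp; omega) tendsto_id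
  have m2 : Tendsto (fun M : ℤ => 2 * M + 1) atBot atBot :=
    tendsto_atBot_mono' _ (by filter_upwards [eventually_le_atBot (-1)] with M hM; show _ ≤ id M; simp; omega) tendsto_id
  refine tendsto_sum_shift (h := fun M : ℤ => (((2 * M + 1 : ℤ) : ℂ)⁻¹) ^ n)
    (t1.comp m1) (t2.comp m2) ?_ b
  split_ifs with he
  · obtain ⟨k, hk⟩ := he
    obtain rfl : n = 2 * k := by omega
    have := (ginv_hasSum_odd k (by omega)).comp Finset.tendsto_Icc_neg
    push_cast
    push_cast at this
    exact this
  · rw [Nat.not_even_iff_odd] at he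
    simp only [gsum_odd_half (fun M : ℤ => (((2 * M + 1 : ℤ) : ℂ)⁻¹) ^ n) (fun M => by
      rw [← he.neg_pow, ← inv_neg]; push_cast; ring_nf)]
    exact (t1.comp m1).comp tendsto_natCast_atTop_atTop

lemma GP.main {B n : ℕ} (g : ℕ → ℤ → ℂ) (hn : n / 2 < B) (a b : ℚ)
    (H : ∀ N : ℕ, 0 < N → Tendsto (fun K : ℕ => ∑ M ∈ Finset.Icc (-(K : ℤ)) K, g N M) atTop
      (𝓝 (if Even n then riemannZeta n * (a + b * (-1) ^ N) else 0))) : GP B n g := by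
  by_cases he : Even n
  · simp only [if_pos he] at H
    obtain ⟨k, hk⟩ := he
    obtain rfl : n = 2 * k := by omega
    refine ⟨fun j => if j = k then a else 0, fun j => if j = k then b else 0, fun N hN => ?_⟩
    convert H N hN using 2
    have hNc : (N : ℂ) ≠ 0 := by exact_mod_cast hN.ne'
    rw [Finset.sum_eq_single k]
    · simp only [if_true]
      rw [mul_assoc, ← mul_pow, mul_inv_cancel₀ hNc]
      push_cast; ring
    · intro j _ hj; simp [hj]
    · intro h; simp at h; omega
  · simp only [if_neg he] at H
    refine ⟨fun _ => 0, fun _ => 0, fun N hN => ?_⟩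
    simpa using H N hN

lemma GP_L (B : ℕ) (i : Fin 5) (n : ℕ) (hn : 0 < n) (hB : n / 2 < B) :
    GP B n (fun N M => ((gL i N M : ℤ) : ℂ)⁻¹ ^ n) := by
  have hone : ∀ b : ℕ, GP B n (fun N M => ((M + b * N : ℤ) : ℂ)⁻¹ ^ n) := by
    intro b
    refine GP.main _ hB 2 0 fun N hN => ?_
    have := glim_one n hn (b * N)
    convert this using 3
    · push_cast; rfl
    · push_cast; ring
  have htwo : GP B n (fun N M => ((2 * M + 3 * N : ℤ) : ℂ)⁻¹ ^ n) := by
    refine GP.main _ hB 1 (2 * (2⁻¹) ^ n - 1) fun N hN => ?_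
    rcases Nat.even_or_odd' N with ⟨N', rfl | rfl⟩
    · have := (glim_one n hn (3 * N')).const_mul ((2⁻¹ : ℂ) ^ n)
      simp only [Finset.mul_sum] at this
      convert this using 3
      · rw [← mul_pow, ← mul_inv]; push_cast; ring_nf
      · split_ifs
        · simp; ring
        · simp
    · have := glim_two n hn (3 * N' + 1)
      convert this using 3
      · congr 3; push_cast; ring
      · rw [pow_succ, pow_mul]; push_cast; ring
  fin_cases i
  · simpa [gL, gal, gbe] using hone 0
  · simpa [gL, gal, gbe] using hone 1
  · simpa [gL, gal, gbe] using hone 2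
  · simpa [gL, gal, gbe] using hone 3
  · simpa [gL, gal, gbe] using htwo

lemma GP_base (B : ℕ) (i : Fin 5) (n : ℕ) (hn : 0 < n) (hB : n / 2 < B) :
    GP B n (fun N M => gchi N M * ((gL i N M : ℤ) : ℂ)⁻¹ ^ n) := by
  have h0 := GP_L B i n hn hB
  have hB0 : 0 < B := by omega
  have hb : ∀ b : ℤ, GP B n (fun N M => (if M = b * N then 1 else 0) * ((gL i N M : ℤ) : ℂ)⁻¹ ^ n) := by
    intro b
    refine GP.point hB0 _ (((gal i * b + gbe i : ℤ) : ℚ)⁻¹ ^ n) 0 (fun N => b * N) ?_ ?_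
    · intro N M h; simp [h]
    · intro N hN
      simp only [if_true, gL]
      push_cast
      rw [one_mul, zero_mul, add_zero, ← mul_pow, ← mul_inv]
      ring_nf
  have hh : GP B n (fun N M => (if 2 * M + 3 * N = 0 then 1 else 0) * ((gL i N M : ℤ) : ℂ)⁻¹ ^ n) := by
    refine GP.point hB0 _ ((gal i * (-3 / 2) + gbe i : ℚ)⁻¹ ^ n / 2)
      ((gal i * (-3 / 2) + gbe i : ℚ)⁻¹ ^ n / 2) (fun N => -3 * ((N / 2 : ℕ) : ℤ)) ?_ ?_
    · intro N M h
      rw [if_neg, zero_mul]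
      intro h2; apply h; omega
    · intro N hN
      rcases Nat.even_or_odd' N with ⟨N', rfl | rfl⟩
      · rw [if_pos (by omega)]
        simp only [gL, pow_mul]
        have : (2 * N') / 2 = N' := by omega
        rw [this]
        push_cast
        have e : ∀ x y : ℂ, (x / 2 + x / 2 * (((-1) ^ 2) ^ N')) * y = x * y := by
          intro x y; simp
        rw [e, one_mul, ← mul_pow, ← mul_inv]
        ring_nf
      · rw [if_neg (by omega), pow_succ, pow_mul]
        simp
  have := ((((h0.add ((hb 0).smul (-1))).add ((hb (-1)).smul (-1))).add ((hb (-2)).smul (-1))).add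
    ((hb (-3)).smul (-1))).add (hh.smul (-1))
  refine this.congr fun N hN M => ?_
  rw [gchi_eq N hN M]
  have e1 : (-1 : ℤ) * (N : ℤ) = -N := by ring
  have e0 : (0 : ℤ) * (N : ℤ) = 0 := by ring
  rw [e0, e1]
  push_cast
  ring

lemma GP_all (e : Fin 5 → ℕ) (he : 0 < ∑ i, e i) :
    GP ((∑ i, e i) / 2 + 1) (∑ i, e i) (fun N M => gchi N M * gE e N M) :=
  GP_gE _ (fun i n h1 h2 => GP_base _ i n h1 h2) _ e rfl he (by omega)

noncomputable def gG (s : ℂ) (e : Fin 5 → ℕ) (x : ℕ × ℤ) : ℂ := 1 / ((x.1 : ℂ) ^ s) * gE e x.1 x.2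

lemma gE_zero (e : Fin 5 → ℕ) (he : ∀ i, 0 < e i) (N : ℕ) (M : ℤ) (i : Fin 5) (h : gL i N M = 0) :
    gE e N M = 0 := by
  unfold gE
  apply Finset.prod_eq_zero (Finset.mem_univ i)
  rw [h]; simp [(he i).ne']

lemma gchi_mul (e : Fin 5 → ℕ) (he : ∀ i, 0 < e i) (N : ℕ) (M : ℤ) :
    gchi N M * gE e N M = gE e N M := by
  by_cases hx : ∀ k, gL k N M ≠ 0
  · simp [gchi, if_pos hx]
  · have hx' := hx
    push Not at hx
    obtain ⟨k, hk⟩ := hx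
    rw [gE_zero e he N M k hk, mul_zero]

lemma gE_bound (e : Fin 5 → ℕ) (he : ∀ i, 0 < e i) (N : ℕ) (M : ℤ) :
    ‖gE e N M‖ ≤ 3 * (1 / (M : ℝ) ^ 2) := by
  by_cases hx : ∀ k, gL k N M ≠ 0
  · have h1 : ∀ k, ‖((gL k N M : ℤ) : ℂ)⁻¹‖ ≤ 1 := by
      intro k
      rw [norm_inv, Complex.norm_intCast]
      apply inv_le_one_of_one_le₀
      exact_mod_cast Int.one_le_abs (hx k)
    have h2 : ‖gE e N M‖ ≤ ∏ k, ‖((gL k N M : ℤ) : ℂ)⁻¹‖ := by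
      unfold gE
      rw [norm_prod]
      refine Finset.prod_le_prod (fun _ _ => norm_nonneg _) fun k _ => ?_
      rw [norm_pow]
      exact pow_le_of_le_one (norm_nonneg _) (h1 k) (he k).ne'
    refine h2.trans ?_
    rw [Fin.prod_univ_five]
    have hM : gL 0 N M = M := by simp [gL, gal, gbe]
    have hM1 : gL 1 N M = M + N := by simp [gL, gal, gbe]
    have hM2 : gL 2 N M = M + 2 * N := by simp [gL, gal, gbe]
    have x0 := hx 0
    have x1 := hx 1
    have x2 := hx 2
    rw [hM] at x0
    have key : |M| ≤ 3 * (|gL 1 N M| * |gL 2 N M|) := by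
      have a1 := Int.one_le_abs x1
      have a2 := Int.one_le_abs x2
      have : M = 2 * gL 1 N M - gL 2 N M := by rw [hM1, hM2]; ring
      have h3 : |M| ≤ 2 * |gL 1 N M| + |gL 2 N M| := by
        have := abs_sub (2 * gL 1 N M) (gL 2 N M)
        rw [abs_mul] at this
        simp only [abs_two] at this
        calc |M| = |2 * gL 1 N M - gL 2 N M| := congrArg _ ‹M = _›
          _ ≤ _ := this
      nlinarith
    have key' : |(M : ℝ)| ≤ 3 * (|(gL 1 N M : ℝ)| * |(gL 2 N M : ℝ)|) := by exact_mod_cast key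
    have p0 : 0 < |(M : ℝ)| := by positivity
    have p1 : 0 < |(gL 1 N M : ℝ)| := by positivity
    have p2 : 0 < |(gL 2 N M : ℝ)| := by positivity
    calc _ ≤ ‖((gL 0 N M : ℤ) : ℂ)⁻¹‖ * ‖((gL 1 N M : ℤ) : ℂ)⁻¹‖ * ‖((gL 2 N M : ℤ) : ℂ)⁻¹‖ * 1 * 1 := by
          gcongr
          · exact h1 3
          · exact h1 4
      _ = |(M : ℝ)|⁻¹ * (|(gL 1 N M : ℝ)| * |(gL 2 N M : ℝ)|)⁻¹ := by
          rw [hM]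
          simp only [norm_inv, Complex.norm_intCast]
          rw [mul_inv]; ring
      _ ≤ |(M : ℝ)|⁻¹ * (3 * |(M : ℝ)|⁻¹) := by
          gcongr
          rw [← div_eq_mul_inv, le_div_iff₀ p0, inv_mul_le_iff₀ (by positivity)]
          linarith
      _ = _ := by rw [← sq_abs (M : ℝ)]; field_simp
  · push Not at hx
    obtain ⟨k, hk⟩ := hx
    rw [gE_zero e he N M k hk, norm_zero]; positivity

lemma gE_summable (e : Fin 5 → ℕ) (he : ∀ i, 0 < e i) (N : ℕ) : Summable (fun M => gE e N M) :=
  Summable.of_norm_bounded ((Real.summable_one_div_int_pow.2 (by norm_num)).mul_left 3)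
    (gE_bound e he N)

lemma gG_summable (s : ℂ) (hs : 1 < s.re) (e : Fin 5 → ℕ) (he : ∀ i, 0 < e i) :
    Summable (gG s e) := by
  have h1 : Summable (fun n : ℕ => ‖1 / ((n : ℂ) ^ s)‖) :=
    (Complex.summable_one_div_nat_cpow.2 hs).norm
  have h2 : Summable (fun M : ℤ => 3 * (1 / (M : ℝ) ^ 2)) :=
    (Real.summable_one_div_int_pow.2 (by norm_num)).mul_left 3
  have h3 := h1.mul_of_nonneg h2 (fun _ => norm_nonneg _) (fun _ => by positivity)
  refine Summable.of_norm_bounded h3 fun x => ?_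
  rw [gG, norm_mul]
  gcongr
  exact gE_bound e he _ _

lemma gchamber (G : ℕ × ℤ → ℂ) (hG : Summable G) (C : Set (ℕ × ℤ)) (i : ℕ+ × ℕ+ → ℕ × ℤ)
    (hinj : Function.Injective i) (hC : ∀ y, i y ∈ C)
    (hr : ∀ x ∈ C, G x ≠ 0 → x ∈ Set.range i) :
    ∑' (m : ℕ+) (n : ℕ+), G (i (m, n)) = ∑' x, C.indicator G x := by
  have h1 : Summable (fun y => G (i y)) := hG.comp_injective hinj
  rw [← h1.tsum_prod, ← hinj.tsum_eq]
  · refine tsum_congr fun y => ?_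
    rw [Set.indicator_of_mem (hC y)]
  · intro x hx
    rw [Function.mem_support] at hx
    have hxC : x ∈ C := by
      by_contra h
      exact hx (Set.indicator_of_notMem h _)
    rw [Set.indicator_of_mem hxC] at hx
    exact hr x hxC hx

lemma gchamber' (G : ℕ × ℤ → ℂ) (hG : Summable G) (C : ℕ → ℤ → Prop) (f₁ : ℕ → ℕ → ℕ)
    (f₂ : ℕ → ℕ → ℤ)
    (hinj : ∀ a b c d, f₁ a b = f₁ c d → f₂ a b = f₂ c d → a = c ∧ b = d)
    (hC : ∀ a b, 0 < a → 0 < b → C (f₁ a b) (f₂ a b))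
    (hr : ∀ N M, C N M → G (N, M) ≠ 0 → ∃ a b, 0 < a ∧ 0 < b ∧ f₁ a b = N ∧ f₂ a b = M) :
    ∑' (m : ℕ+) (n : ℕ+), G (f₁ m n, f₂ m n) =
      ∑' x, ({x | C x.1 x.2} : Set (ℕ × ℤ)).indicator G x := by
  refine gchamber G hG _ (fun y => (f₁ y.1 y.2, f₂ y.1 y.2)) ?_ ?_ ?_
  · rintro ⟨a, b⟩ ⟨c, d⟩ h
    rw [Prod.mk.injEq] at h
    obtain ⟨h1, h2⟩ := hinj _ _ _ _ h.1 h.2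
    rw [PNat.coe_inj] at h1 h2
    simp only at h1 h2
    rw [h1, h2]
  · rintro ⟨a, b⟩
    exact hC _ _ a.pos b.pos
  · rintro ⟨N, M⟩ h h0
    obtain ⟨a, b, ha, hb, h1, h2⟩ := hr N M h h0
    exact ⟨(⟨a, ha⟩, ⟨b, hb⟩), Prod.ext h1 h2⟩

lemma galt_hasSum (z : ℂ) (hz : 1 < z.re) :
    HasSum (fun n : ℕ => (-1) ^ n * (1 / (n : ℂ) ^ z)) (phiC z) := by
  have h : HasSum (fun n : ℕ => 1 / (n : ℂ) ^ z) (riemannZeta z) := by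
    rw [zeta_eq_tsum_one_div_nat_cpow hz]
    exact (Complex.summable_one_div_nat_cpow.2 hz).hasSum
  have i2 : Function.Injective (fun n : ℕ => 2 * n) := fun a b hab => by simpa using hab
  have he : HasSum (fun n : ℕ => if Even n then 2 * (1 / (n : ℂ) ^ z) else 0)
      ((2 : ℂ) ^ (1 - z) * riemannZeta z) := by
    rw [← i2.hasSum_iff]
    · have := h.mul_left ((2 : ℂ) ^ (1 - z))
      refine Eq.mp ?_ this
      congr 1
      funext n
      simp only [Function.comp_apply]
      rw [if_pos (by simp)]
      have e1 : ((2 * n : ℕ) : ℂ) ^ z = (2 : ℂ) ^ z * (n : ℂ) ^ z := by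
        rw [Nat.cast_mul, Complex.natCast_mul_natCast_cpow]; simp
      rw [e1, Complex.cpow_sub _ _ two_ne_zero, Complex.cpow_one]
      rw [one_div, one_div, mul_inv]; ring
    · intro x hx
      rw [if_neg]
      rintro ⟨y, hy⟩
      exact hx ⟨y, by simp only; omega⟩
  have := he.sub h
  have hv : phiC z = (2 : ℂ) ^ (1 - z) * riemannZeta z - riemannZeta z := by unfold phiC; ring
  rw [hv]
  refine Eq.mp ?_ this
  congr 1
  funext n
  split_ifs with hn
  · rw [hn.neg_one_pow]; ring
  · rw [(Nat.not_even_iff_odd.1 hn).neg_one_pow]; ring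

lemma gG_sum (e : Fin 5 → ℕ) (he : ∀ i, 0 < e i) :
    ∃ c d : ℕ → ℚ, ∀ s : ℂ, 1 < s.re → ∑' x, gG s e x =
      ∑ k ∈ Finset.range ((∑ i, e i) / 2 + 1), riemannZeta (2 * k) *
            ((c k : ℂ) * riemannZeta (s + (∑ i, e i : ℕ) - 2 * k) +
              (d k : ℂ) * phiC (s + (∑ i, e i : ℕ) - 2 * k)) := by
  have hpos : 0 < ∑ i, e i := Finset.sum_pos (fun i _ => he i) ⟨0, Finset.mem_univ _⟩
  obtain ⟨c, d, H⟩ := GP_all e hpos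
  refine ⟨c, d, fun s hs => ?_⟩
  simp only [gchi_mul e he] at H
  set w := ∑ i, e i with hw
  have hre : ∀ k ∈ Finset.range (w / 2 + 1), 1 < (s + (w : ℂ) - 2 * (k : ℂ)).re := by
    intro k hk
    have : 2 * k ≤ w := by simp at hk; omega
    have h2 : (2 : ℝ) * k ≤ w := by exact_mod_cast this
    simp
    linarith
  have hsum := gG_summable s hs e he
  rw [hsum.tsum_prod]
  have hfin : HasSum (fun N : ℕ => ∑ k ∈ Finset.range (w / 2 + 1), riemannZeta (2 * k) *
      ((c k : ℂ) * (1 / (N : ℂ) ^ (s + (w : ℂ) - 2 * (k : ℂ))) +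
        (d k : ℂ) * ((-1) ^ N * (1 / (N : ℂ) ^ (s + (w : ℂ) - 2 * (k : ℂ))))))
      (∑ k ∈ Finset.range (w / 2 + 1), riemannZeta (2 * k) *
            ((c k : ℂ) * riemannZeta (s + (w : ℂ) - 2 * k) +
              (d k : ℂ) * phiC (s + (w : ℂ) - 2 * k))) := by
    refine hasSum_sum fun k hk => ?_
    have h : HasSum (fun n : ℕ => 1 / (n : ℂ) ^ (s + (w : ℂ) - 2 * (k : ℂ)))
        (riemannZeta (s + (w : ℂ) - 2 * (k : ℂ))) := by
      rw [zeta_eq_tsum_one_div_nat_cpow (hre k hk)]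
      exact (Complex.summable_one_div_nat_cpow.2 (hre k hk)).hasSum
    exact ((h.mul_left _).add ((galt_hasSum _ (hre k hk)).mul_left _)).mul_left _
  rw [← hfin.tsum_eq]
  refine tsum_congr fun N => ?_
  simp only [gG]
  rw [tsum_mul_left]
  rcases Nat.eq_zero_or_pos N with rfl | hN
  · have hs0 : s ≠ 0 := by rintro rfl; simp at hs; linarith
    rw [Finset.sum_eq_zero]
    · simp [hs0]
    · intro k hk
      have hz0 : s + (w : ℂ) - 2 * (k : ℂ) ≠ 0 := by
        intro h0
        have := hre k hk
        rw [h0] at this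
        simp at this; linarith
      simp [Complex.zero_cpow hz0]
  · have hlim := (gE_summable e he N).hasSum.comp Finset.tendsto_Icc_neg
    have := tendsto_nhds_unique hlim (H N hN)
    rw [this, Finset.mul_sum]
    refine Finset.sum_congr rfl fun k hk => ?_
    have hNc : (N : ℂ) ≠ 0 := by exact_mod_cast hN.ne'
    have e1 : (N : ℂ) ^ (s + (w : ℂ) - 2 * (k : ℂ)) = (N : ℂ) ^ s * (N : ℂ) ^ w / (N : ℂ) ^ (2 * k) := by
      rw [Complex.cpow_sub _ _ hNc, Complex.cpow_add _ _ hNc, Complex.cpow_natCast]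
      congr 1
      rw [← Complex.cpow_natCast]; push_cast; rfl
    rw [e1]
    have : (N : ℂ) ^ s ≠ 0 := by simp [Complex.cpow_eq_zero_iff, hNc]
    rw [inv_pow]
    field_simp

lemma gdecomp (s : ℂ) (hs : 1 < s.re) (p q r u v : ℕ) (hp : 0 < p) (hq : 0 < q) (hr : 0 < r)
    (hu : 0 < u) (hv : 0 < v) :
    zetaG2C p s q r u v + (-1 : ℂ) ^ p * zetaG2C p q s r v u +
          (-1 : ℂ) ^ (p + q) * zetaG2C v q r s p u +
          (-1 : ℂ) ^ (p + q + v) * zetaG2C v r q s u p +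
          (-1 : ℂ) ^ (p + q + r + v) * zetaG2C u r s q v p +
          (-1 : ℂ) ^ (p + q + r + u + v) * zetaG2C u s r q p v = ∑' x, gG s ![p, q, r, u, v] x := by
  set e : Fin 5 → ℕ := ![p, q, r, u, v] with hedef
  have he : ∀ i, 0 < e i := by
    intro i; fin_cases i <;> simpa [hedef]
  have hsum := gG_summable s hs e he
  have hs0 : s ≠ 0 := by rintro rfl; simp at hs; linarith
  set G := gG s e with hG
  have hG0 : ∀ N M, G (N, M) ≠ 0 → 0 < N := by
    intro N M h
    by_contra h0
    obtain rfl : N = 0 := by omega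
    apply h
    simp [hG, gG, hs0]
  have hGL : ∀ N M, G (N, M) ≠ 0 → M ≠ 0 ∧ M + N ≠ 0 ∧ M + 2 * N ≠ 0 ∧ M + 3 * N ≠ 0 ∧
      2 * M + 3 * N ≠ 0 := by
    intro N M h
    have : ∀ i, gL i N M ≠ 0 := by
      intro i hi
      apply h
      simp [hG, gG, gE_zero e he N M i hi]
    simpa [Fin.forall_fin_succ, gL, gal, gbe] using this
  have hval : ∀ N M, G (N, M) = 1 / ((N : ℂ) ^ s) * (((M : ℂ)⁻¹) ^ p * ((M + N : ℂ)⁻¹) ^ q *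
      ((M + 2 * N : ℂ)⁻¹) ^ r * ((M + 3 * N : ℂ)⁻¹) ^ u * ((2 * M + 3 * N : ℂ)⁻¹) ^ v) := by
    intro N M
    simp [hG, gG, gE, Fin.prod_univ_five, gL, gal, gbe, hedef]
    left; ring
  have c1 := gchamber' G hsum (fun N M => 0 < M) (fun m n => n) (fun m n => m)
    (by intros; omega) (by intros; omega)
    (fun N M h h0 => ⟨M.toNat, N, by have := hG0 N M h0; omega⟩)
  have c2 := gchamber' G hsum (fun N M => M < 0 ∧ 0 < M + N) (fun m n => m + n) (fun m n => -m)
    (by intros; omega) (by intros; omega)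
    (fun N M h h0 => ⟨(-M).toNat, (M + N).toNat, by omega⟩)
  have c3 := gchamber' G hsum (fun N M => M + N < 0 ∧ 0 < 2 * M + 3 * N) (fun m n => m + 2 * n)
    (fun m n => -(m + 3 * n))
    (by intros; omega) (by intros; omega)
    (fun N M h h0 => ⟨(2 * M + 3 * N).toNat, (-(M + N)).toNat, by omega⟩)
  have c4 := gchamber' G hsum (fun N M => 2 * M + 3 * N < 0 ∧ 0 < M + 2 * N) (fun m n => m + 2 * n)
    (fun m n => -(2 * m + 3 * n))
    (by intros; omega) (by intros; omega)
    (fun N M h h0 => ⟨(-(2 * M + 3 * N)).toNat, (M + 2 * N).toNat, by omega⟩)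
  have c5 := gchamber' G hsum (fun N M => M + 2 * N < 0 ∧ 0 < M + 3 * N) (fun m n => m + n)
    (fun m n => -(2 * m + 3 * n))
    (by intros; omega) (by intros; omega)
    (fun N M h h0 => ⟨(M + 3 * N).toNat, (-(M + 2 * N)).toNat, by omega⟩)
  have c6 := gchamber' G hsum (fun N M => M + 3 * N < 0) (fun m n => n)
    (fun m n => -(m + 3 * n))
    (by intros; omega) (by intros; omega)
    (fun N M h h0 => ⟨(-(M + 3 * N)).toNat, N, by have := hG0 N M h0; omega⟩)
  have z1 : zetaG2C p s q r u v =
      ∑' x, ({x | 0 < x.2} : Set (ℕ × ℤ)).indicator G x := by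
    refine Eq.trans ?_ c1
    unfold zetaG2C
    refine tsum_congr fun m => tsum_congr fun n => ?_
    rw [hval]
    simp only [Complex.cpow_natCast]
    push_cast
    ring
  have z2 : (-1 : ℂ) ^ p * zetaG2C p q s r v u =
      ∑' x, ({x | x.2 < 0 ∧ 0 < x.2 + x.1} : Set (ℕ × ℤ)).indicator G x := by
    refine Eq.trans ?_ c2
    unfold zetaG2C
    simp only [← tsum_mul_left]
    refine tsum_congr fun m => tsum_congr fun n => ?_
    rw [hval]
    simp only [Complex.cpow_natCast]
    push_cast
    generalize ((m : ℕ) : ℂ) = a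
    generalize ((n : ℕ) : ℂ) = b
    have e1 : -a + (a + b) = b := by ring
    have e2 : -a + 2 * (a + b) = a + 2 * b := by ring
    have e3 : -a + 3 * (a + b) = 2 * a + 3 * b := by ring
    have e4 : 2 * -a + 3 * (a + b) = a + 3 * b := by ring
    rw [e1, e2, e3, e4, inv_neg, neg_pow]
    ring
  have z3 : (-1 : ℂ) ^ (p + q) * zetaG2C v q r s p u =
      ∑' x, ({x | x.2 + x.1 < 0 ∧ 0 < 2 * x.2 + 3 * x.1} : Set (ℕ × ℤ)).indicator G x := by
    refine Eq.trans ?_ c3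
    unfold zetaG2C
    simp only [← tsum_mul_left]
    refine tsum_congr fun m => tsum_congr fun n => ?_
    rw [hval]
    simp only [Complex.cpow_natCast]
    push_cast
    generalize ((m : ℕ) : ℂ) = a
    generalize ((n : ℕ) : ℂ) = b
    have e1 : -(a + 3 * b) + (a + 2 * b) = -b := by ring
    have e2 : -(a + 3 * b) + 2 * (a + 2 * b) = a + b := by ring
    have e3 : -(a + 3 * b) + 3 * (a + 2 * b) = 2 * a + 3 * b := by ring
    have e4 : 2 * -(a + 3 * b) + 3 * (a + 2 * b) = a := by ring
    rw [e1, e2, e3, e4, inv_neg, inv_neg, neg_pow, neg_pow b⁻¹]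
    ring
  have z4 : (-1 : ℂ) ^ (p + q + v) * zetaG2C v r q s u p =
      ∑' x, ({x | 2 * x.2 + 3 * x.1 < 0 ∧ 0 < x.2 + 2 * x.1} : Set (ℕ × ℤ)).indicator G x := by
    refine Eq.trans ?_ c4
    unfold zetaG2C
    simp only [← tsum_mul_left]
    refine tsum_congr fun m => tsum_congr fun n => ?_
    rw [hval]
    simp only [Complex.cpow_natCast]
    push_cast
    generalize ((m : ℕ) : ℂ) = a
    generalize ((n : ℕ) : ℂ) = b
    have e1 : -(2 * a + 3 * b) + (a + 2 * b) = -(a + b) := by ring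
    have e2 : -(2 * a + 3 * b) + 2 * (a + 2 * b) = b := by ring
    have e3 : -(2 * a + 3 * b) + 3 * (a + 2 * b) = a + 3 * b := by ring
    have e4 : 2 * -(2 * a + 3 * b) + 3 * (a + 2 * b) = -a := by ring
    rw [e1, e2, e3, e4, inv_neg, inv_neg, inv_neg, neg_pow, neg_pow (a + b)⁻¹, neg_pow a⁻¹]
    ring
  have z5 : (-1 : ℂ) ^ (p + q + r + v) * zetaG2C u r s q v p =
      ∑' x, ({x | x.2 + 2 * x.1 < 0 ∧ 0 < x.2 + 3 * x.1} : Set (ℕ × ℤ)).indicator G x := by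
    refine Eq.trans ?_ c5
    unfold zetaG2C
    simp only [← tsum_mul_left]
    refine tsum_congr fun m => tsum_congr fun n => ?_
    rw [hval]
    simp only [Complex.cpow_natCast]
    push_cast
    generalize ((m : ℕ) : ℂ) = a
    generalize ((n : ℕ) : ℂ) = b
    have e1 : -(2 * a + 3 * b) + (a + b) = -(a + 2 * b) := by ring
    have e2 : -(2 * a + 3 * b) + 2 * (a + b) = -b := by ring
    have e3 : -(2 * a + 3 * b) + 3 * (a + b) = a := by ring
    have e4 : 2 * -(2 * a + 3 * b) + 3 * (a + b) = -(a + 3 * b) := by ring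
    rw [e1, e2, e3, e4, inv_neg, inv_neg, inv_neg, inv_neg, neg_pow, neg_pow (a + 2 * b)⁻¹,
      neg_pow b⁻¹, neg_pow (a + 3 * b)⁻¹]
    ring
  have z6 : (-1 : ℂ) ^ (p + q + r + u + v) * zetaG2C u s r q p v =
      ∑' x, ({x | x.2 + 3 * x.1 < 0} : Set (ℕ × ℤ)).indicator G x := by
    refine Eq.trans ?_ c6
    unfold zetaG2C
    simp only [← tsum_mul_left]
    refine tsum_congr fun m => tsum_congr fun n => ?_
    rw [hval]
    simp only [Complex.cpow_natCast]
    push_cast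
    generalize ((m : ℕ) : ℂ) = a
    generalize ((n : ℕ) : ℂ) = b
    have e1 : -(a + 3 * b) + b = -(a + 2 * b) := by ring
    have e2 : -(a + 3 * b) + 2 * b = -(a + b) := by ring
    have e3 : -(a + 3 * b) + 3 * b = -a := by ring
    have e4 : 2 * -(a + 3 * b) + 3 * b = -(2 * a + 3 * b) := by ring
    rw [e1, e2, e3, e4, inv_neg, inv_neg, inv_neg, inv_neg, inv_neg, neg_pow,
      neg_pow (a + 2 * b)⁻¹, neg_pow (a + b)⁻¹, neg_pow a⁻¹, neg_pow (2 * a + 3 * b)⁻¹]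
    ring
  rw [z1, z2, z3, z4, z5, z6]
  have hI : ∀ C : Set (ℕ × ℤ), Summable (C.indicator G) := fun C => hsum.indicator C
  rw [← (hI _).tsum_add (hI _), ← ((hI _).add (hI _)).tsum_add (hI _),
    ← (((hI _).add (hI _)).add (hI _)).tsum_add (hI _),
    ← ((((hI _).add (hI _)).add (hI _)).add (hI _)).tsum_add (hI _),
    ← (((((hI _).add (hI _)).add (hI _)).add (hI _)).add (hI _)).tsum_add (hI _)]
  refine tsum_congr ?_
  rintro ⟨N, M⟩
  by_cases h0 : G (N, M) = 0
  · simp [Set.indicator_apply, h0]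
  · have h1 := hG0 N M h0
    have h2 := hGL N M h0
    simp only [Set.indicator_apply, Set.mem_ofPred_eq]
    split_ifs <;> first | (exfalso; omega) | simp


theorem functional_relation_G2_I2 (p q r u v : ℕ) (hp : 0 < p) (hq : 0 < q) (hr : 0 < r)
    (hu : 0 < u) (hv : 0 < v) :
    ∃ c d : ℕ → ℚ, ∀ s : ℂ, 1 < s.re →
      zetaG2C p s q r u v + (-1 : ℂ) ^ p * zetaG2C p q s r v u +
          (-1 : ℂ) ^ (p + q) * zetaG2C v q r s p u +
          (-1 : ℂ) ^ (p + q + v) * zetaG2C v r q s u p +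
          (-1 : ℂ) ^ (p + q + r + v) * zetaG2C u r s q v p +
          (-1 : ℂ) ^ (p + q + r + u + v) * zetaG2C u s r q p v =
        ∑ k ∈ Finset.range ((p + q + r + u + v + 1) / 2 + 1),
          riemannZeta (2 * k) *
            ((c k : ℂ) * riemannZeta (s + (p + q + r + u + v : ℕ) - 2 * k) +
              (d k : ℂ) * phiC (s + (p + q + r + u + v : ℕ) - 2 * k)) := by
  classical
  obtain ⟨c, d, H⟩ := gG_sum ![p, q, r, u, v] (by
    intro i; fin_cases i <;> simpa)
  have hw : ∑ i, ![p, q, r, u, v] i = p + q + r + u + v := by simp [Fin.sum_univ_five]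
  rw [hw] at H
  set w := p + q + r + u + v with hwdef
  refine ⟨fun k => if k < w / 2 + 1 then c k else 0, fun k => if k < w / 2 + 1 then d k else 0,
    fun s hs => ?_⟩
  rw [gdecomp s hs p q r u v hp hq hr hu hv, H s hs]
  have hsub : Finset.range (w / 2 + 1) ⊆ Finset.range ((w + 1) / 2 + 1) := by
    intro k hk; simp at hk ⊢; omega
  rw [← Finset.sum_subset hsub]
  · refine Finset.sum_congr rfl fun k hk => ?_
    rw [Finset.mem_range] at hk
    simp only [if_pos hk]
  · intro k _ hk
    rw [Finset.mem_range] at hk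
    simp only [if_neg hk]
    simp
end
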